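/- arXiv:2007.15725 — 5 statements merged into one kernel-verified Lean document; each statement's English description precedes it below -/
import Mathlib

section
/- Let α ∈ R^n with α_j ≤ 0 for all j and α ≠ 0, let β ∈ R^m and γ ∈ R, and suppose α·z + β·δ ≤ γ is valid for X^{0,u} and defines a facet of conv(X^{0,u}). Then the inequality is a positive multiple of one of the following: δ_i − δ_{i+1} − Σ_{j∈S_{i+1}∖S_i} z_j ≤ 0 for some i ∈ {1,…,m−1}; 1 − δ_1 − Σ_{j∈S_1} z_j ≤ 0; or −z_j ≤ 0 for some j ∈ J. -/
open Finset

noncomputable section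

def Xset (n m l u : ℕ) (S : Fin m → Finset (Fin n)) : Set ((Fin n → ℝ) × (Fin m → ℝ)) :=
  {zd | (∀ j, zd.1 j = 0 ∨ zd.1 j = 1) ∧ (∀ i, zd.2 i = 0 ∨ zd.2 i = 1) ∧
        (∀ i, zd.2 i = ∏ j ∈ S i, (1 - zd.1 j)) ∧
        (l : ℝ) ≤ ∑ j, zd.1 j ∧ ∑ j, zd.1 j ≤ (u : ℝ)}

def Dset (n m l u : ℕ) (S : Fin m → Finset (Fin n)) : Set (Fin m → ℝ) :=
  Prod.snd '' Xset n m l u S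

def Xfiber (n m l u : ℕ) (S : Fin m → Finset (Fin n)) (δ : Fin m → ℝ) :
    Set (Fin n → ℝ) :=
  {z | (z, δ) ∈ Xset n m l u S}

/-- The family is closed under nonempty intersection. -/
def ClosedInter (n m : ℕ) (S : Fin m → Finset (Fin n)) : Prop :=
  ∀ i j : Fin m, (S i ∩ S j).Nonempty → ∃ k, S i ∩ S j = S k

/-- The family is proper. -/
def ProperFam (n m l u : ℕ) (S : Fin m → Finset (Fin n)) : Prop :=
  ClosedInter n m S ∧
  ∃ D : Finset (Fin m → ℝ), (D : Set (Fin m → ℝ)) = Dset n m l u S ∧ D.card = m + 1 ∧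
    AffineIndependent ℝ (Subtype.val : {x : Fin m → ℝ // x ∈ D} → (Fin m → ℝ))

/-- `f x ≤ c` is valid and defines a facet of `conv P`. -/
def IsFacet {E : Type*} [AddCommGroup E] [Module ℝ E] (P : Set E) (f : E → ℝ) (c : ℝ) :
    Prop :=
  (∀ x ∈ P, f x ≤ c) ∧
  Module.finrank ℝ (affineSpan ℝ {x ∈ convexHull ℝ P | f x = c}).direction + 1 =
    Module.finrank ℝ (affineSpan ℝ P).direction

def SS (n m : ℕ) (S : Fin m → Finset (Fin n)) : ℕ → Finset (Fin n) :=
  fun k => if h : 1 ≤ k ∧ k ≤ m then S ⟨k - 1, by omega⟩ else if k = 0 then ∅ else Finset.univ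

def dd (m : ℕ) (δ : Fin m → ℝ) : ℕ → ℝ :=
  fun k => if h : 1 ≤ k ∧ k ≤ m then δ ⟨k - 1, by omega⟩ else if k = 0 then 1 else 0

def mixLeLHS (n m u : ℕ) (S : Fin m → Finset (Fin n)) (p : ℕ) (S' : Finset (Fin n))
    (zd : (Fin n → ℝ) × (Fin m → ℝ)) : ℝ :=
  ∑ j ∈ S', zd.1 j + ((u : ℝ) - ((S' \ SS n m S p).card : ℝ)) * dd m zd.2 p
    + ∑ i ∈ Finset.Icc (p + 1) m,
        (((S' \ SS n m S (i - 1)).card : ℝ) - ((S' \ SS n m S i).card : ℝ)) * dd m zd.2 i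

def MixLe (n m u : ℕ) (S : Fin m → Finset (Fin n)) (p : ℕ) (S' : Finset (Fin n))
    (zd : (Fin n → ℝ) × (Fin m → ℝ)) : Prop :=
  mixLeLHS n m u S p S' zd ≤ (u : ℝ)

def mixGeLHS (n m l : ℕ) (S : Fin m → Finset (Fin n)) (p : ℕ) (S' : Finset (Fin n))
    (zd : (Fin n → ℝ) × (Fin m → ℝ)) : ℝ :=
  (((S' ∪ SS n m S p).card : ℝ) - (n : ℝ) + (l : ℝ)) * dd m zd.2 p
    + ∑ i ∈ Finset.Icc (p + 1) m,
        (((S' ∪ SS n m S i).card : ℝ) - ((S' ∪ SS n m S (i - 1)).card : ℝ)) * dd m zd.2 i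
    - ∑ j ∈ S', zd.1 j

def MixGe (n m l : ℕ) (S : Fin m → Finset (Fin n)) (p : ℕ) (S' : Finset (Fin n))
    (zd : (Fin n → ℝ) × (Fin m → ℝ)) : Prop :=
  mixGeLHS n m l S p S' zd ≤ 0

def NestedLin (n m l u : ℕ) (S : Fin m → Finset (Fin n))
    (zd : (Fin n → ℝ) × (Fin m → ℝ)) : Prop :=
  ((l : ℝ) ≤ ∑ j, zd.1 j) ∧ (∑ j, zd.1 j ≤ (u : ℝ)) ∧
  (∀ i : Fin m, ∀ j ∈ S i, zd.1 j + zd.2 i ≤ 1) ∧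
  (1 ≤ dd m zd.2 1 + ∑ j ∈ SS n m S 1, zd.1 j) ∧
  (0 ≤ dd m zd.2 m) ∧
  (∀ j, 0 ≤ zd.1 j) ∧
  (∀ j, j ∉ SS n m S m → zd.1 j ≤ 1) ∧
  (∀ i : ℕ, 1 ≤ i → i + 1 ≤ m → dd m zd.2 (i + 1) ≤ dd m zd.2 i) ∧
  (∀ i : ℕ, 1 ≤ i → i + 1 ≤ m →
    dd m zd.2 i - dd m zd.2 (i + 1) ≤ ∑ j ∈ SS n m S (i + 1) \ SS n m S i, zd.1 j)

def FollowsPattern (n : ℕ) (α α' : Fin n → ℝ) : Prop :=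
  (∀ j, (0 ≤ α j → 0 ≤ α' j) ∧ (α j ≤ 0 → α' j ≤ 0)) ∧
  (∀ j₁ j₂ : Fin n, α j₂ ≤ α j₁ → α' j₂ ≤ α' j₁)

def IsFacetSet {E : Type*} [AddCommGroup E] [Module ℝ E] (P : Set E) (F : Set E) : Prop :=
  ∃ (f : E →ₗ[ℝ] ℝ) (c : ℝ), (∀ x ∈ P, f x ≤ c) ∧
    F = {x ∈ convexHull ℝ P | f x = c} ∧
    Module.finrank ℝ (affineSpan ℝ F).direction + 1 =
      Module.finrank ℝ (affineSpan ℝ P).direction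

theorem aux_mult {E : Type*} [AddCommGroup E] [Module ℝ E] [FiniteDimensional ℝ E]
    (P : Set E) (f g : E →ₗ[ℝ] ℝ) (c d : ℝ) (hf : f ≠ 0)
    (h2 : 2 ≤ Module.finrank ℝ E)
    (hfull : ∀ h : E →ₗ[ℝ] ℝ, (∀ x ∈ P, ∀ y ∈ P, h x = h y) → h = 0)
    (hF : IsFacet P (fun x => f x) c)
    (hg : ∀ x ∈ P, f x = c → g x = d) : ∃ t : ℝ, g = t • f ∧ d = t * c := by
  obtain ⟨hv, hdim⟩ := hF
  have hconv : convexHull ℝ P ⊆ {x | f x < c ∨ (f x = c ∧ g x = d)} := by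
    apply convexHull_min
    · intro x hx
      rcases (hv x hx).lt_or_eq with h | h
      · exact Or.inl h
      · exact Or.inr ⟨h, hg x hx h⟩
    · intro x hx y hy a b ha hb hab
      have hb' : b = 1 - a := by linarith
      subst hb'
      simp only [Set.mem_ofPred_eq, map_add, map_smul, smul_eq_mul] at hx hy ⊢
      rcases hx with hx | ⟨hx, hx'⟩
      · rcases ha.eq_or_lt with h | h
        · subst h
          simpa using hy
        · left
          have : f y ≤ c := by rcases hy with h | h <;> linarith [h]
          nlinarith
      · rcases hy with hy | ⟨hy, hy'⟩
        · rcases hb.eq_or_lt with h | h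
          · right
            rw [← h]
            have : a = 1 := by linarith
            subst this
            constructor <;> linarith
          · left
            nlinarith
        · right
          rw [hx, hx', hy, hy']
          constructor <;> ring
  have htop : (affineSpan ℝ P).direction = ⊤ := by
    by_contra hne
    obtain ⟨h, h0, hle⟩ := Submodule.exists_le_ker_of_lt_top _ (lt_top_iff_ne_top.2 hne)
    apply h0
    apply hfull
    intro x hx y hy
    have : x -ᵥ y ∈ (affineSpan ℝ P).direction :=
      AffineSubspace.vsub_mem_direction (subset_affineSpan ℝ P hx) (subset_affineSpan ℝ P hy)
    have := hle this
    rw [LinearMap.mem_ker, vsub_eq_sub, map_sub] at this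
    linarith
  rw [htop, finrank_top] at hdim
  set F : Set E := {x ∈ convexHull ℝ P | f x = c} with hFdef
  have hFne : F.Nonempty := by
    by_contra hne
    rw [Set.not_nonempty_iff_eq_empty] at hne
    rw [hne, direction_affineSpan, vectorSpan_empty, finrank_bot] at hdim
    omega
  have hFg : ∀ x ∈ F, g x = d := by
    intro x hx
    rcases hconv hx.1 with h | h
    · have := hx.2
      linarith
    · exact h.2
  have key : ∀ (k : E →ₗ[ℝ] ℝ) (e : ℝ), (∀ x ∈ F, k x = e) →
      (affineSpan ℝ F).direction ≤ LinearMap.ker k := by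
    intro k e hk
    rw [direction_affineSpan, vectorSpan_def, Submodule.span_le]
    rintro _ ⟨x, hx, y, hy, rfl⟩
    simp [hk x hx, hk y hy]
  have kf := key f c (fun x hx => hx.2)
  have kg := key g d hFg
  have hker : (affineSpan ℝ F).direction = LinearMap.ker f := by
    apply Submodule.eq_of_le_of_finrank_le kf
    have := LinearMap.finrank_range_add_finrank_ker f
    have h1 : LinearMap.range f ≠ ⊥ := by rwa [Ne, LinearMap.range_eq_bot]
    have h3 : Module.finrank ℝ (LinearMap.range f) ≠ 0 := by
      rwa [Ne, Submodule.finrank_eq_zero]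
    omega
  rw [hker] at kg
  obtain ⟨v, hvv⟩ : ∃ v, f v ≠ 0 := by
    by_contra h
    push Not at h
    exact hf (LinearMap.ext h)
  have hgf : g = (g v / f v) • f := by
    ext x
    have : x - (f x / f v) • v ∈ LinearMap.ker f := by
      simp [hvv]
    have := kg this
    rw [LinearMap.mem_ker, map_sub, map_smul, smul_eq_mul] at this
    simp only [LinearMap.smul_apply, smul_eq_mul]
    field_simp at this ⊢
    linarith
  refine ⟨g v / f v, hgf, ?_⟩
  obtain ⟨x, hx⟩ := hFne
  have h1 := hFg x hx
  have h2 : f x = c := hx.2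
  rw [hgf] at h1
  simp only [LinearMap.smul_apply, smul_eq_mul] at h1
  rw [← h1, h2]

def Lfun {n m : ℕ} (a : Fin n → ℝ) (b : Fin m → ℝ) : ((Fin n → ℝ) × (Fin m → ℝ)) →ₗ[ℝ] ℝ where
  toFun zd := ∑ j, a j * zd.1 j + ∑ i, b i * zd.2 i
  map_add' x y := by
    simp only [Prod.fst_add, Prod.snd_add, Pi.add_apply, mul_add, Finset.sum_add_distrib]
    ring
  map_smul' t x := by
    simp only [Prod.smul_fst, Prod.smul_snd, Pi.smul_apply, smul_eq_mul, RingHom.id_apply,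
      mul_add, Finset.mul_sum]
    congr 1 <;> exact Finset.sum_congr rfl (fun _ _ => by ring)

theorem Lfun_apply {n m : ℕ} (a : Fin n → ℝ) (b : Fin m → ℝ) (zd) :
    Lfun a b zd = ∑ j, a j * zd.1 j + ∑ i, b i * zd.2 i := rfl

theorem Lfun_fst {n m : ℕ} (a : Fin n → ℝ) (b : Fin m → ℝ) (j : Fin n) :
    Lfun a b (Pi.single j 1, 0) = a j := by
  simp [Lfun_apply, Pi.single_apply]

theorem Lfun_snd {n m : ℕ} (a : Fin n → ℝ) (b : Fin m → ℝ) (i : Fin m) :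
    Lfun a b (0, Pi.single i 1) = b i := by
  simp [Lfun_apply, Pi.single_apply]

theorem exists_Lfun {n m : ℕ} (h : ((Fin n → ℝ) × (Fin m → ℝ)) →ₗ[ℝ] ℝ) :
    ∃ a b, h = Lfun a b := by
  refine ⟨fun j => h (Pi.single j 1, 0), fun i => h (0, Pi.single i 1), ?_⟩
  apply LinearMap.prod_ext
  · apply LinearMap.pi_ext'
    intro j
    ext
    simp [Lfun_fst]
  · apply LinearMap.pi_ext'
    intro j
    ext
    simp [Lfun_snd]

open Classical in
def pt {n m : ℕ} (S : Fin m → Finset (Fin n)) (A : Finset (Fin n)) :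
    (Fin n → ℝ) × (Fin m → ℝ) :=
  (fun j => if j ∈ A then 1 else 0, fun i => if Disjoint (S i) A then 1 else 0)

open Classical in
theorem Lfun_pt {n m : ℕ} (S : Fin m → Finset (Fin n)) (A : Finset (Fin n))
    (a : Fin n → ℝ) (b : Fin m → ℝ) :
    Lfun a b (pt S A) = ∑ j ∈ A, a j + ∑ i, b i * (if Disjoint (S i) A then 1 else 0) := by
  rw [Lfun_apply]
  simp [pt]

open Classical in
theorem prod_ind {n : ℕ} (T A : Finset (Fin n)) :
    ∏ j ∈ T, (1 - (if j ∈ A then (1:ℝ) else 0)) = if Disjoint T A then 1 else 0 := by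
  split_ifs with h
  · apply Finset.prod_eq_one
    intro j hj
    rw [if_neg (Finset.disjoint_left.1 h hj)]
    simp
  · rw [Finset.not_disjoint_iff] at h
    obtain ⟨j, hj, hA⟩ := h
    apply Finset.prod_eq_zero hj
    simp [hA]

theorem pt_mem {n m u : ℕ} (S : Fin m → Finset (Fin n)) (A : Finset (Fin n)) (hA : A.card ≤ u) :
    pt S A ∈ Xset n m 0 u S := by
  classical
  refine ⟨?_, ?_, ?_, ?_, ?_⟩
  · intro j
    simp only [pt]
    split_ifs <;> simp
  · intro j
    simp only [pt]
    split_ifs <;> simp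
  · intro i
    simp only [pt]
    rw [prod_ind]
  · simp [pt]
  · simp [pt, hA]

theorem mem_pt {n m u : ℕ} (S : Fin m → Finset (Fin n)) (x) (hx : x ∈ Xset n m 0 u S) :
    ∃ A : Finset (Fin n), A.card ≤ u ∧ x = pt S A := by
  classical
  obtain ⟨h1, -, h3, -, h5⟩ := hx
  have e : x.1 = fun j => if j ∈ Finset.univ.filter (fun j => x.1 j = 1) then (1:ℝ) else 0 := by
    funext j
    rcases h1 j with h | h <;> simp [h]
  generalize Finset.univ.filter (fun j => x.1 j = 1) = A at e
  refine ⟨A, ?_, ?_⟩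
  · rw [e] at h5
    simp at h5
    exact h5
  · apply Prod.ext
    · exact e
    · funext i
      rw [h3, e, prod_ind]
      rfl

theorem full_dim {n m u : ℕ} (S : Fin m → Finset (Fin n)) (hm : 0 < m) (hu : 2 ≤ u)
    (hmono : ∀ i j : Fin m, i ≤ j → S i ⊆ S j)
    (hnested : ∀ i j : Fin m, i < j → S i ⊂ S j)
    (hS1 : 2 ≤ (S ⟨0, hm⟩).card)
    (h : ((Fin n → ℝ) × (Fin m → ℝ)) →ₗ[ℝ] ℝ)
    (hc : ∀ x ∈ Xset n m 0 u S, ∀ y ∈ Xset n m 0 u S, h x = h y) : h = 0 := by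
  classical
  obtain ⟨a, b, rfl⟩ := exists_Lfun h
  have hc' : ∀ A B : Finset (Fin n), A.card ≤ 2 → B.card ≤ 2 →
      Lfun a b (pt S A) = Lfun a b (pt S B) := fun A B hA hB =>
    hc _ (pt_mem S A (hA.trans hu)) _ (pt_mem S B (hB.trans hu))
  have hnd : ∀ (A : Finset (Fin n)) (j), j ∈ A → j ∈ S ⟨0, hm⟩ → ∀ i, ¬ Disjoint (S i) A := by
    intro A j hA hj i hd
    exact Finset.disjoint_left.1 hd (hmono ⟨0, hm⟩ i (Fin.mk_le_of_le_val (Nat.zero_le _)) hj) hA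
  have ha : a = 0 := by
    funext j
    obtain ⟨j', hj', hne⟩ := Finset.exists_mem_ne (by omega : 1 < (S ⟨0, hm⟩).card) j
    have := hc' {j, j'} {j'} Finset.card_le_two (by simp)
    rw [Lfun_pt, Lfun_pt, Finset.sum_pair hne.symm] at this
    simp only [hnd {j, j'} j' (by simp) hj', hnd {j'} j' (by simp) hj'] at this
    simpa using this
  subst ha
  obtain ⟨j', hj'⟩ : (S ⟨0, hm⟩).Nonempty := Finset.card_pos.1 (by omega)
  have h0 : ∀ A : Finset (Fin n), A.card ≤ 2 →
      ∑ i, b i * (if Disjoint (S i) A then (1:ℝ) else 0) = 0 := by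
    intro A hA
    have := hc' A {j'} hA (by simp)
    rw [Lfun_pt, Lfun_pt] at this
    simp only [hnd {j'} j' (by simp) hj'] at this
    simpa using this
  have hpre : ∀ i : Fin m, ∑ k, b k * (if k ≤ i then (1:ℝ) else 0) = 0 := by
    intro i
    by_cases hi : (i : ℕ) + 1 < m
    · have hss := hnested i ⟨i + 1, hi⟩ (Fin.lt_def.2 (Nat.lt_succ_self _))
      obtain ⟨j, hj1, hj2⟩ := Finset.exists_of_ssubset hss
      have := h0 {j} (by simp)
      refine Eq.trans ?_ this
      apply Finset.sum_congr rfl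
      intro k _
      congr 1
      apply if_congr _ rfl rfl
      rw [Finset.disjoint_singleton_right]
      constructor
      · intro hk hjk
        exact hj2 (hmono _ _ hk hjk)
      · intro hk
        by_contra hlt
        apply hk
        refine hmono _ _ ?_ hj1
        rw [Fin.le_def]
        rw [Fin.le_def] at hlt
        simp
        omega
    · have := h0 ∅ (by simp)
      refine Eq.trans ?_ this
      apply Finset.sum_congr rfl
      intro k _
      congr 1
      have : k ≤ i := by
        rw [Fin.le_def]
        omega
      simp [this]
  have hb : ∀ N : ℕ, ∀ i : Fin m, (i : ℕ) = N → b i = 0 := by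
    intro N
    induction N using Nat.strong_induction_on with
    | _ N ih =>
      intro i hi
      have := hpre i
      rw [Finset.sum_eq_single i] at this
      · simpa using this
      · intro k _ hk
        by_cases hki : k ≤ i
        · rw [ih k (by have := lt_of_le_of_ne hki hk; rw [Fin.lt_def] at this; omega) k rfl]
          simp
        · simp [hki]
      · simp
  have : b = 0 := funext fun i => hb i i rfl
  subst this
  ext <;> simp [Lfun_apply]

theorem stmt9 (n m l u : ℕ) (S : Fin m → Finset (Fin n))
    (hn : 0 < n) (hm : 0 < m) (hu : 2 ≤ u) (hlu : l < u)
    (hnested : ∀ i j : Fin m, i < j → S i ⊂ S j)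
    (hS1 : 2 ≤ (SS n m S 1).card)
    (hSm : l ≤ n - (SS n m S m).card)
    (α : Fin n → ℝ) (β : Fin m → ℝ) (γ : ℝ)
    (hα : ∀ j, α j ≤ 0) (hα0 : α ≠ 0)
    (hfacet : IsFacet (Xset n m 0 u S)
      (fun zd => ∑ j, α j * zd.1 j + ∑ i, β i * zd.2 i) γ) :
    ∃ c : ℝ, 0 < c ∧
      ((∃ i : Fin m, ∃ h : (i : ℕ) + 1 < m,
          (α = fun j => if j ∈ S ⟨(i : ℕ) + 1, h⟩ \ S i then -c else 0) ∧
          (β = fun k => if k = i then c else if k = (⟨(i : ℕ) + 1, h⟩ : Fin m) then -c else 0) ∧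
          γ = 0) ∨
       ((α = fun j => if j ∈ S ⟨0, hm⟩ then -c else 0) ∧
          (β = fun k => if k = (⟨0, hm⟩ : Fin m) then -c else 0) ∧ γ = -c) ∨
       (∃ j0 : Fin n, (α = fun j => if j = j0 then -c else 0) ∧ β = 0 ∧ γ = 0)) := by
  classical
  have hmono : ∀ i j : Fin m, i ≤ j → S i ⊆ S j := by
    intro i j hij
    rcases hij.eq_or_lt with h | h
    · rw [h]
    · exact (hnested i j h).1
  have hS0 : 2 ≤ (S ⟨0, hm⟩).card := by
    have : SS n m S 1 = S ⟨0, hm⟩ := by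
      unfold SS
      rw [dif_pos ⟨le_refl 1, hm⟩]
    rwa [this] at hS1
  have hval : ∀ A : Finset (Fin n), A.card ≤ u → Lfun α β (pt S A) ≤ γ :=
    fun A hA => hfacet.1 _ (pt_mem S A hA)
  obtain ⟨j0, hj0⟩ : ∃ j0, α j0 < 0 := by
    by_contra h
    push Not at h
    exact hα0 (funext fun j => le_antisymm (hα j) (h j))
  have hne : Lfun α β ≠ 0 := by
    intro h
    have h1 := Lfun_fst α β j0
    rw [h] at h1
    simp at h1
    linarith
  have main : ∀ (a : Fin n → ℝ) (b : Fin m → ℝ) (d : ℝ), a j0 = -1 →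
      (∀ A : Finset (Fin n), A.card ≤ u → Lfun α β (pt S A) = γ → Lfun a b (pt S A) = d) →
      ∃ c : ℝ, 0 < c ∧ (∀ j, α j = c * a j) ∧ (∀ i, β i = c * b i) ∧ γ = c * d := by
    intro a b d haj hab
    obtain ⟨t, ht, htd⟩ := aux_mult (Xset n m 0 u S) (Lfun α β) (Lfun a b) γ d hne
      (by simp; omega) (full_dim S hm hu hmono hnested hS0) hfacet
      (by
        intro x hx hxt
        obtain ⟨A, hA, rfl⟩ := mem_pt S x hx
        exact hab A hA hxt)
    have e1 : ∀ j, a j = t * α j := by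
      intro j
      rw [← Lfun_fst a b j, ht, LinearMap.smul_apply, Lfun_fst, smul_eq_mul]
    have e2 : ∀ i, b i = t * β i := by
      intro j
      rw [← Lfun_snd a b j, ht, LinearMap.smul_apply, Lfun_snd, smul_eq_mul]
    have tpos : 0 < t := by
      have := e1 j0
      rw [haj] at this
      by_contra h
      push Not at h
      nlinarith
    refine ⟨t⁻¹, inv_pos.2 tpos, ?_, ?_, ?_⟩
    · intro j
      rw [e1]
      field_simp
    · intro j
      rw [e2]
      field_simp
    · rw [htd]
      field_simp
  -- removal
  have hR : ∀ (A : Finset (Fin n)) (j : Fin n), A.card ≤ u → Lfun α β (pt S A) = γ → j ∈ A →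
      α j < 0 → ∃ i, j ∈ S i ∧ Disjoint (S i) (A.erase j) := by
    intro A j hA ht hj haj
    by_contra hcon
    push Not at hcon
    have h1 := hval (A.erase j) ((Finset.card_le_card (Finset.erase_subset _ _)).trans hA)
    rw [← ht, Lfun_pt, Lfun_pt, ← Finset.add_sum_erase A α hj] at h1
    have h2 : ∑ i, β i * (if Disjoint (S i) (A.erase j) then (1:ℝ) else 0)
        = ∑ i, β i * (if Disjoint (S i) A then (1:ℝ) else 0) := by
      apply Finset.sum_congr rfl
      intro i _
      congr 1
      apply if_congr _ rfl rfl
      constructor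
      · intro h
        by_cases hji : j ∈ S i
        · exact absurd h (hcon i hji)
        · rw [Finset.disjoint_left] at h ⊢
          intro k hk hkA
          refine h hk (Finset.mem_erase.2 ⟨?_, hkA⟩)
          rintro rfl
          exact hji hk
      · intro h
        exact h.mono_right (Finset.erase_subset _ _)
    rw [h2] at h1
    linarith
  by_cases hcase : ∀ A : Finset (Fin n), A.card ≤ u → Lfun α β (pt S A) = γ → j0 ∉ A
  · obtain ⟨c, hc, h1, h2, h3⟩ := main (fun j => if j = j0 then -1 else 0) 0 0 (by simp) (by
      intro A hA ht
      rw [Lfun_pt]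
      have := hcase A hA ht
      simp [this])
    refine ⟨c, hc, Or.inr (Or.inr ⟨j0, ?_, ?_, ?_⟩)⟩
    · funext j
      rw [h1]
      split_ifs <;> simp
    · funext i
      rw [h2]
      simp
    · rw [h3]
      simp
  push Not at hcase
  obtain ⟨A0, hA0, ht0, hjA0⟩ := hcase
  obtain ⟨i0, hji0, hdis0⟩ := hR A0 j0 hA0 ht0 hjA0 hj0
  have hsing : γ ≤ Lfun α β (pt S {j0}) := by
    rw [← ht0, Lfun_pt, Lfun_pt, ← Finset.add_sum_erase A0 α hjA0, Finset.sum_singleton]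
    have h2 : ∑ i, β i * (if Disjoint (S i) A0 then (1:ℝ) else 0)
        = ∑ i, β i * (if Disjoint (S i) {j0} then (1:ℝ) else 0) := by
      apply Finset.sum_congr rfl
      intro i _
      congr 1
      apply if_congr _ rfl rfl
      constructor
      · intro h
        exact h.mono_right (Finset.singleton_subset_iff.2 hjA0)
      · intro h
        rw [Finset.disjoint_singleton_right] at h
        have hle : i ≤ i0 := by
          by_contra hlt
          exact h (hmono i0 i (le_of_not_ge hlt) hji0)
        rw [Finset.disjoint_left] at hdis0 ⊢
        intro k hk hkA
        refine hdis0 (hmono _ _ hle hk) (Finset.mem_erase.2 ⟨?_, hkA⟩)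
        rintro rfl
        exact h hk
    rw [h2]
    have : ∑ j ∈ A0.erase j0, α j ≤ 0 := Finset.sum_nonpos fun j _ => hα j
    linarith
  have hL : ∀ j, (∀ i, j ∈ S i ↔ j0 ∈ S i) → α j < 0 := by
    intro j hj
    have h1 := (hval {j} (by simp; omega)).trans hsing
    rw [Lfun_pt, Lfun_pt] at h1
    simp only [Finset.disjoint_singleton_right, hj, Finset.sum_singleton] at h1
    linarith
  obtain ⟨q, hq, hqmin⟩ : ∃ q : Fin m, j0 ∈ S q ∧ ∀ i, j0 ∈ S i → q ≤ i := by
    have hne' : (Finset.univ.filter (fun i => j0 ∈ S i)).Nonempty := ⟨i0, by simp [hji0]⟩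
    refine ⟨Finset.min' _ hne', ?_, ?_⟩
    · have := Finset.min'_mem _ hne'
      simpa using this
    · intro i hi
      exact Finset.min'_le _ _ (by simp [hi])
  have hcount : ∀ R : Finset (Fin n), R ⊆ S q → j0 ∉ R → (∀ i, i < q → S i ⊆ R) →
      ∀ A : Finset (Fin n), A.card ≤ u → Lfun α β (pt S A) = γ →
      ∑ j ∈ A, (if j ∈ S q \ R then (-1:ℝ) else 0) =
        (if Disjoint (S q) A then (1:ℝ) else 0) - (if Disjoint R A then 1 else 0) := by
    intro R hRq hjR hRi A hA ht
    by_cases hex : ∃ j ∈ A, j ∈ S q \ R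
    · obtain ⟨j, hjA, hjq⟩ := hex
      rw [Finset.mem_sdiff] at hjq
      have haj : α j < 0 := by
        apply hL
        intro i
        rcases lt_or_ge i q with h | h
        · constructor
          · intro hi
            exact absurd (hRi i h hi) hjq.2
          · intro hi
            exact absurd (hRi i h hi) hjR
        · exact iff_of_true (hmono _ _ h hjq.1) (hmono _ _ h hq)
      obtain ⟨k, hk, hkd⟩ := hR A j hA ht hjA haj
      have hqk : q ≤ k := by
        by_contra hlt
        exact hjq.2 (hRi k (lt_of_not_ge hlt) hk)
      have hqd : Disjoint (S q) (A.erase j) := hkd.mono_left (hmono _ _ hqk)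
      rw [Finset.disjoint_left] at hqd
      have d1 : ¬ Disjoint (S q) A := fun h => Finset.disjoint_left.1 h hjq.1 hjA
      have d2 : Disjoint R A := by
        rw [Finset.disjoint_left]
        intro x hx hxA
        refine hqd (hRq hx) (Finset.mem_erase.2 ⟨?_, hxA⟩)
        rintro rfl
        exact hjq.2 hx
      rw [if_neg d1, if_pos d2, Finset.sum_eq_single j]
      · simp [hjq.1, hjq.2]
      · intro x hxA hxj
        rw [if_neg]
        intro hx
        exact hqd (Finset.mem_sdiff.1 hx).1 (Finset.mem_erase.2 ⟨hxj, hxA⟩)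
      · intro h
        exact absurd hjA h
    · push Not at hex
      have hd : Disjoint (S q) A ↔ Disjoint R A := by
        constructor
        · intro h
          exact h.mono_left hRq
        · intro h
          rw [Finset.disjoint_left] at h ⊢
          intro x hx hxA
          by_cases hxR : x ∈ R
          · exact h hxR hxA
          · exact hex x hxA (Finset.mem_sdiff.2 ⟨hx, hxR⟩)
      rw [Finset.sum_eq_zero (fun x hx => if_neg (hex x hx))]
      simp [hd]
  rcases q with ⟨q, hqm⟩
  rcases q with _ | i
  · have hc0 := hcount ∅ (by simp) (by simp) (by
      intro i hi
      rw [Fin.lt_def] at hi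
      simp at hi)
    obtain ⟨c, hc, h1, h2, h3⟩ := main (fun j => if j ∈ S ⟨0, hm⟩ then -1 else 0)
      (fun k => if k = ⟨0, hm⟩ then -1 else 0) (-1) (by simp [hq]) (by
      intro A hA ht
      have := hc0 A hA ht
      simp only [Finset.sdiff_empty] at this
      rw [Lfun_pt, this]
      simp only [ite_mul, zero_mul, Finset.sum_ite_eq', Finset.mem_univ, if_true]
      split_ifs <;> simp_all)
    refine ⟨c, hc, Or.inr (Or.inl ⟨?_, ?_, ?_⟩)⟩
    · funext j
      rw [h1]
      split_ifs <;> simp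
    · funext i
      rw [h2]
      split_ifs <;> simp
    · rw [h3]
      simp
  · have him : i < m := by omega
    have hlt : (⟨i, him⟩ : Fin m) < ⟨i + 1, hqm⟩ := Fin.lt_def.2 (Nat.lt_succ_self _)
    have hji : j0 ∉ S ⟨i, him⟩ := fun h => absurd (hqmin _ h) (not_le_of_gt hlt)
    have hc0 := hcount (S ⟨i, him⟩) (hmono _ _ hlt.le) hji (by
      intro k hk
      apply hmono
      rw [Fin.lt_def] at hk
      rw [Fin.le_def]
      simp at hk ⊢
      omega)
    obtain ⟨c, hc, h1, h2, h3⟩ := main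
      (fun j => if j ∈ S ⟨i + 1, hqm⟩ \ S ⟨i, him⟩ then -1 else 0)
      (fun k => (if k = ⟨i, him⟩ then 1 else 0) + (if k = ⟨i + 1, hqm⟩ then -1 else 0)) 0
      (by simp [hq, hji]) (by
      intro A hA ht
      have := hc0 A hA ht
      rw [Lfun_pt, this]
      simp only [add_mul, Finset.sum_add_distrib, ite_mul, zero_mul, Finset.sum_ite_eq',
        Finset.mem_univ, if_true]
      ring)
    refine ⟨c, hc, Or.inl ⟨⟨i, him⟩, hqm, ?_, ?_, ?_⟩⟩
    · funext j
      rw [h1]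
      split_ifs <;> simp
    · funext k
      rw [h2]
      by_cases hk : k = ⟨i, him⟩
      · have : k ≠ ⟨i + 1, hqm⟩ := by
          rw [hk]
          exact hlt.ne
        rw [if_pos hk, if_pos hk, if_neg this]
        ring
      · rw [if_neg hk, if_neg hk]
        split_ifs <;> simp
    · rw [h3]
      simp
end
end

section
/- For every p ∈ I and every S' ⊆ J with |S'∖S_p| ≤ u − 1, the mixing inequality Mix≤(S',p) holds for every (z,δ) ∈ X^{0,u}. -/
open Finset

noncomputable section

theorem stmt10 (n m l u : ℕ) (S : Fin m → Finset (Fin n))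
    (hn : 0 < n) (hm : 0 < m) (hu : 2 ≤ u) (hlu : l < u)
    (hnested : ∀ i j : Fin m, i < j → S i ⊂ S j)
    (hS1 : 2 ≤ (SS n m S 1).card)
    (hSm : l ≤ n - (SS n m S m).card)
    (p : ℕ) (hp1 : 1 ≤ p) (hpm : p ≤ m)
    (S' : Finset (Fin n)) (hS' : (S' \ SS n m S p).card ≤ u - 1) :
    ∀ zd ∈ Xset n m 0 u S, MixLe n m u S p S' zd := by
  rintro ⟨z, d⟩ ⟨hz, hd, hprod, -, hsum⟩
  simp only at hz hd hprod hsum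
  have hz0 : ∀ j, 0 ≤ z j := fun j => by rcases hz j with h | h <;> rw [h] <;> norm_num
  have hz1 : ∀ j, z j ≤ 1 := fun j => by rcases hz j with h | h <;> rw [h] <;> norm_num
  have hSS : ∀ k (h1 : 1 ≤ k) (h2 : k ≤ m), SS n m S k = S ⟨k - 1, by omega⟩ := by
    intro k h1 h2
    simp [SS, h1, h2]
  have hdd : ∀ k (h1 : 1 ≤ k) (h2 : k ≤ m), dd m d k = d ⟨k - 1, by omega⟩ := by
    intro k h1 h2
    simp [dd, h1, h2]
  have hmono : ∀ a b, 1 ≤ a → a ≤ b → b ≤ m → SS n m S a ⊆ SS n m S b := by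
    intro a b h1 hab hb
    rcases hab.eq_or_lt with h | h
    · rw [h]
    · rw [hSS a h1 (by omega), hSS b (by omega) hb]
      exact (hnested _ _ (by rw [Fin.lt_def]; simp only; omega)).1
  have hdp : ∀ k, 1 ≤ k → k ≤ m → dd m d k = ∏ j ∈ SS n m S k, (1 - z j) := by
    intro k h1 h2
    rw [hdd k h1 h2, hSS k h1 h2, hprod]
  have hd01 : ∀ k, 1 ≤ k → k ≤ m → dd m d k = 0 ∨ dd m d k = 1 := by
    intro k h1 h2
    rw [hdd k h1 h2]
    exact hd _
  have hzd : ∀ k, 1 ≤ k → k ≤ m → ∀ j ∈ SS n m S k, z j + dd m d k ≤ 1 := by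
    intro k h1 h2 j hj
    rcases hz j with h | h
    · rcases hd01 k h1 h2 with h' | h' <;> rw [h, h'] <;> norm_num
    · rw [hdp k h1 h2, Finset.prod_eq_zero hj (by rw [h]; norm_num), h]
      norm_num
  unfold MixLe mixLeLHS
  simp only
  rcases hd01 p hp1 hpm with h0 | h0
  · have hz' : ∀ i ∈ Finset.Icc (p + 1) m, (((S' \ SS n m S (i - 1)).card : ℝ)
        - ((S' \ SS n m S i).card : ℝ)) * dd m d i = 0 := by
      intro i hi
      rw [Finset.mem_Icc] at hi
      have h0' := h0
      rw [hdp p hp1 hpm, Finset.prod_eq_zero_iff] at h0'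
      obtain ⟨j, hj, hj0⟩ := h0'
      rw [hdp i (by omega) hi.2,
        Finset.prod_eq_zero (hmono p i hp1 (by omega) hi.2 hj) hj0, mul_zero]
    rw [Finset.sum_eq_zero hz', h0]
    have : ∑ j ∈ S', z j ≤ ∑ j, z j :=
      Finset.sum_le_sum_of_subset_of_nonneg (Finset.subset_univ _) (fun j _ _ => hz0 j)
    linarith
  · have key : ∀ q, p ≤ q → q ≤ m → ∑ j ∈ S', z j + ∑ i ∈ Finset.Icc (p + 1) q,
        (((S' \ SS n m S (i - 1)).card : ℝ) - ((S' \ SS n m S i).card : ℝ)) * dd m d i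
        ≤ ((S' \ SS n m S p).card : ℝ) - ((S' \ SS n m S q).card : ℝ)
          + ∑ j ∈ S' \ SS n m S q, z j := by
      intro q hq
      induction q, hq using Nat.le_induction with
      | base =>
        intro _
        have : ∑ j ∈ S' \ SS n m S p, z j = ∑ j ∈ S', z j := by
          apply Finset.sum_subset Finset.sdiff_subset
          intro j hj hj'
          have hjp : j ∈ SS n m S p := by
            by_contra h
            exact hj' (Finset.mem_sdiff.2 ⟨hj, h⟩)
          have := hzd p hp1 hpm j hjp
          linarith [hz0 j]
        simp [this]
      | succ q hq ih =>
        intro hqm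
        have ih := ih (by omega)
        rw [← Finset.insert_Icc_right_eq_Icc_add_one (by omega), Finset.sum_insert (by simp)]
        have hsub : S' \ SS n m S (q + 1) ⊆ S' \ SS n m S q :=
          Finset.sdiff_subset_sdiff (le_refl _) (hmono q (q + 1) (by omega) (by omega) hqm)
        have e1 := Finset.sum_sdiff (f := z) hsub
        have e2 : (((S' \ SS n m S q) \ (S' \ SS n m S (q + 1))).card : ℝ)
            + ((S' \ SS n m S (q + 1)).card : ℝ) = ((S' \ SS n m S q).card : ℝ) := by
          exact_mod_cast Finset.card_sdiff_add_card_eq_card hsub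
        have e3 : ∑ j ∈ (S' \ SS n m S q) \ (S' \ SS n m S (q + 1)), (z j + dd m d (q + 1))
            ≤ ∑ j ∈ (S' \ SS n m S q) \ (S' \ SS n m S (q + 1)), (1 : ℝ) := by
          apply Finset.sum_le_sum
          intro j hj
          apply hzd (q + 1) (by omega) hqm
          simp only [Finset.mem_sdiff] at hj
          tauto
        rw [Finset.sum_add_distrib, Finset.sum_const, Finset.sum_const, nsmul_eq_mul,
          nsmul_eq_mul, mul_one] at e3
        simp only [Nat.add_sub_cancel]
        rw [← e2] at ih ⊢
        rw [← e1] at ih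
        linarith
    have hk := key m hpm le_rfl
    have hT : ∑ j ∈ S' \ SS n m S m, z j ≤ ((S' \ SS n m S m).card : ℝ) := by
      have := Finset.sum_le_sum (fun j (_ : j ∈ S' \ SS n m S m) => hz1 j)
      simpa using this
    rw [h0]
    linarith
end
end

section
/- conv(X^{0,u}) equals the set of all (z,δ) ∈ R^n × R^m satisfying the nested linearization system with l replaced by 0, together with the mixing inequality Mix≤(S',p) for every p ∈ I and every S' ⊆ J with |S'∖S_p| ≤ u − 1. -/
open Finset

noncomputable section

/-! ### Helper lemmas -/

lemma aux_layer {n : ℕ} (w : Fin n → ℝ) : ∀ (N : ℕ) (a : Fin n → ℝ), (∀ j, 0 ≤ a j) →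
    (univ.filter (fun j => 0 < a j)).card ≤ N →
    (∀ c : ℝ, 0 < c → ∑ j ∈ univ.filter (fun j => c ≤ a j), w j ≤ 0) →
    ∑ j, a j * w j ≤ 0 := by
  intro N
  induction N with
  | zero =>
    intro a ha hN _
    have h0 : ∀ j, a j = 0 := by
      intro j
      have : (univ.filter (fun j => 0 < a j)) = ∅ := by
        apply Finset.card_eq_zero.mp; omega
      have hj : j ∉ univ.filter (fun j => 0 < a j) := by rw [this]; simp
      simp at hj
      exact le_antisymm hj (ha j)
    simp [h0]
  | succ N ih =>
    intro a ha hN hc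
    by_cases hne : (univ.filter (fun j => 0 < a j)).Nonempty
    · obtain ⟨e, he, hmin⟩ := Finset.exists_min_image _ a hne
      have hepos : 0 < a e := (Finset.mem_filter.mp he).2
      set c := a e with hcdef
      let a' : Fin n → ℝ := fun j => if 0 < a j then a j - c else 0
      have hcle : ∀ j, 0 < a j → c ≤ a j := fun j hj => hmin j (by simp [hj])
      have h1 : ∑ j, a' j * w j ≤ 0 := by
        apply ih
        · intro j
          by_cases hj : 0 < a j
          · simp only [a', hj, if_true]; linarith [hcle j hj]
          · simp [a', hj]
        · have hss : univ.filter (fun j => 0 < a' j) ⊂ univ.filter (fun j => 0 < a j) := by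
            rw [Finset.ssubset_iff_of_subset]
            · refine ⟨e, he, ?_⟩
              simp [a', ← hcdef]
            · intro j hj
              simp only [Finset.mem_filter, Finset.mem_univ, true_and] at hj ⊢
              by_contra hn
              simp [a', hn] at hj
          have := Finset.card_lt_card hss
          omega
        · intro c' hc'
          have := hc (c + c') (by linarith)
          convert this using 2
          ext j
          simp only [Finset.mem_filter, Finset.mem_univ, true_and, a']
          by_cases hj : 0 < a j
          · simp only [hj, if_true]
            constructor <;> intro h <;> linarith
          · simp only [hj, if_false]
            constructor <;> intro h <;> linarith [ha j]
      have h2 := hc c hepos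
      have h3 : ∑ j, a j * w j = ∑ j, a' j * w j
          + c * ∑ j ∈ univ.filter (fun j => c ≤ a j), w j := by
        rw [Finset.mul_sum, Finset.sum_filter, ← Finset.sum_add_distrib]
        apply Finset.sum_congr rfl
        intro j _
        by_cases hj : 0 < a j
        · simp only [a', hj, hcle j hj, if_true]; ring
        · have h0 : a j = 0 := le_antisymm (not_lt.mp hj) (ha j)
          have : ¬ c ≤ a j := by rw [h0]; linarith
          simp only [a', hj, this, if_false]; rw [h0]; ring
      rw [h3]
      nlinarith
    · apply ih a ha _ hc
      rw [Finset.not_nonempty_iff_eq_empty.mp hne]; simp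

lemma aux_top {n : ℕ} (α : Fin n → ℝ) : ∀ (r : ℕ) (R : Finset (Fin n)),
    ∃ A : Finset (Fin n), A ⊆ R ∧ A.card ≤ r ∧ (∀ j ∈ A, 0 < α j) ∧
      ∀ c : ℝ, 0 < c → min r (R.filter (fun j => c ≤ α j)).card
        ≤ (A.filter (fun j => c ≤ α j)).card := by
  intro r
  induction r with
  | zero => intro R; exact ⟨∅, by simp⟩
  | succ r ih =>
    intro R
    by_cases hne : (R.filter (fun j => 0 < α j)).Nonempty
    · obtain ⟨e, he, hmax⟩ := Finset.exists_max_image _ α hne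
      obtain ⟨heR, hepos⟩ := Finset.mem_filter.mp he
      obtain ⟨A, hAR, hAc, hAp, hA⟩ := ih (R.erase e)
      have heA : e ∉ A := fun h => by simpa using hAR h
      refine ⟨insert e A, ?_, ?_, ?_, ?_⟩
      · intro j hj
        rcases Finset.mem_insert.mp hj with rfl | hj
        · exact heR
        · exact Finset.mem_of_mem_erase (hAR hj)
      · rw [Finset.card_insert_of_notMem heA]; omega
      · intro j hj
        rcases Finset.mem_insert.mp hj with rfl | hj
        · exact hepos
        · exact hAp j hj
      · intro c hc
        by_cases hec : c ≤ α e
        · have := hA c hc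
          rw [Finset.filter_insert, if_pos hec, Finset.card_insert_of_notMem (by simp [heA])]
          rw [Finset.filter_erase, Finset.card_erase_of_mem (by simp [heR, hec])] at this
          omega
        · have : R.filter (fun j => c ≤ α j) = ∅ := by
            apply Finset.filter_eq_empty_iff.mpr
            intro j hj hcj
            have := hmax j (by simp [hj]; linarith)
            linarith
          rw [this]; simp
    · refine ⟨∅, by simp, by simp, by simp, ?_⟩
      intro c hc
      have : R.filter (fun j => c ≤ α j) = ∅ := by
        apply Finset.filter_eq_empty_iff.mpr
        intro j hj hcj
        exact hne ⟨j, by simp [hj]; linarith⟩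
      rw [this]; simp

lemma aux_top' {n : ℕ} (α : Fin n → ℝ) (u : ℕ) (hu : 1 ≤ u) (R B : Finset (Fin n))
    (hBR : B ⊆ R) (hB : B.Nonempty) :
    ∃ A : Finset (Fin n), A ⊆ R ∧ A.card ≤ u ∧ (∃ e ∈ A, e ∈ B) ∧
      (∀ c : ℝ, 0 < c → min (if (B ∩ univ.filter (fun j => c ≤ α j)) = ∅ then u - 1 else u)
        (univ.filter (fun j => c ≤ α j) ∩ R).card
        ≤ (A ∩ univ.filter (fun j => c ≤ α j)).card) ∧
      (∀ c : ℝ, 0 < c → (A ∩ univ.filter (fun j => c ≤ - α j)).card ≤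
        if B ⊆ univ.filter (fun j => c ≤ - α j) then 1 else 0) := by
  obtain ⟨e, he, hmax⟩ := Finset.exists_max_image _ α hB
  obtain ⟨A, hAR, hAc, hAp, hA⟩ := aux_top α (u - 1) (R.erase e)
  have heA : e ∉ A := fun h => by simpa using hAR h
  refine ⟨insert e A, ?_, ?_, ⟨e, by simp, he⟩, ?_, ?_⟩
  · intro j hj
    rcases Finset.mem_insert.mp hj with rfl | hj
    · exact hBR he
    · exact Finset.mem_of_mem_erase (hAR hj)
  · rw [Finset.card_insert_of_notMem heA]; omega
  · intro c hc
    have hh := hA c hc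
    have e1 : univ.filter (fun j => c ≤ α j) ∩ R = R.filter (fun j => c ≤ α j) := by
      ext j; simp [and_comm]
    have e2 : insert e A ∩ univ.filter (fun j => c ≤ α j)
        = (insert e A).filter (fun j => c ≤ α j) := by
      ext j; simp
    rw [e1, e2, Finset.filter_insert]
    by_cases hec : c ≤ α e
    · have hne : B ∩ univ.filter (fun j => c ≤ α j) ≠ ∅ := by
        intro h
        have : e ∈ B ∩ univ.filter (fun j => c ≤ α j) := by simp [he, hec]
        rw [h] at this; simp at this
      rw [if_neg hne, if_pos hec, Finset.card_insert_of_notMem (by simp [heA])]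
      rw [Finset.filter_erase, Finset.card_erase_of_mem (by simp [hBR he, hec])] at hh
      omega
    · have hem : B ∩ univ.filter (fun j => c ≤ α j) = ∅ := by
        rw [Finset.eq_empty_iff_forall_notMem]
        intro j hj
        simp only [Finset.mem_inter, Finset.mem_filter, Finset.mem_univ, true_and] at hj
        linarith [hmax j hj.1]
      rw [if_pos hem, if_neg hec]
      rw [Finset.filter_erase, Finset.erase_eq_of_notMem (by simp; intro _; linarith)] at hh
      exact hh
  · intro c hc
    split_ifs with hs
    · have : insert e A ∩ univ.filter (fun j => c ≤ - α j) ⊆ {e} := by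
        intro j hj
        simp only [Finset.mem_inter, Finset.mem_insert, Finset.mem_filter, Finset.mem_univ,
          true_and] at hj
        rcases hj.1 with rfl | h
        · simp
        · linarith [hAp j h]
      simpa using Finset.card_le_card this
    · simp only [nonpos_iff_eq_zero, Finset.card_eq_zero]
      rw [Finset.eq_empty_iff_forall_notMem]
      intro j hj
      simp only [Finset.mem_inter, Finset.mem_insert, Finset.mem_filter, Finset.mem_univ,
        true_and] at hj
      rcases hj.1 with rfl | h
      · apply hs
        intro i hi
        simp only [Finset.mem_filter, Finset.mem_univ, true_and]
        linarith [hmax i hi]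
      · linarith [hAp j h]

lemma aux_abel (c d : ℕ → ℝ) (m p : ℕ) (hp : p ≤ m) :
    ∑ k ∈ Finset.Icc p m, c k * (d k - d (k + 1)) =
      c p * d p - ∑ i ∈ Finset.Icc (p + 1) m, (c (i - 1) - c i) * d i - c m * d (m + 1) := by
  induction m, hp using Nat.le_induction with
  | base => simp; ring
  | succ m hp ih =>
    rw [Finset.sum_Icc_succ_top (by omega), ih, Finset.sum_Icc_succ_top (by omega)]
    simp only [Nat.add_sub_cancel]
    ring

lemma aux_dl {n : ℕ} (s : ℕ → Finset (Fin n)) (hs : Monotone s) (d : ℕ → ℝ) (z : Fin n → ℝ)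
    (T : Finset (Fin n)) (p q : ℕ) (hpq : p ≤ q)
    (hz : ∀ i, 1 ≤ i → i ≤ q → ∀ j ∈ s i, z j + d i ≤ 1) :
    ∑ j ∈ T \ s p, z j + ∑ i ∈ Finset.Icc (p + 1) q,
      (((T \ s (i - 1)).card : ℝ) - ((T \ s i).card : ℝ)) * d i ≤
    ∑ j ∈ T \ s q, z j + ((T \ s p).card : ℝ) - ((T \ s q).card : ℝ) := by
  induction q, hpq using Nat.le_induction with
  | base => simp
  | succ q hp ih =>
    have ih' := ih (fun i h1 h2 => hz i h1 (by omega))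
    rw [Finset.sum_Icc_succ_top (by omega)]
    simp only [Nat.add_sub_cancel]
    have hsub : T \ s (q + 1) ⊆ T \ s q := Finset.sdiff_subset_sdiff le_rfl (hs (by omega))
    have e1 := Finset.sum_sdiff hsub (f := z)
    have e2 := Finset.sum_sdiff hsub (f := fun _ => (1 : ℝ))
    simp only [Finset.sum_const, nsmul_eq_mul, mul_one] at e2
    have e3 : ∑ j ∈ (T \ s q) \ (T \ s (q + 1)), z j ≤
        ∑ j ∈ (T \ s q) \ (T \ s (q + 1)), (1 - d (q + 1)) := by
      apply Finset.sum_le_sum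
      intro j hj
      simp only [Finset.mem_sdiff, not_and, not_not] at hj
      linarith [hz (q + 1) (by omega) le_rfl j (hj.2 hj.1.1)]
    simp only [Finset.sum_const, nsmul_eq_mul] at e3
    have e4 : (((T \ s q) \ (T \ s (q + 1))).card : ℝ)
       = ((T \ s q).card : ℝ) - ((T \ s (q + 1)).card : ℝ) := by linarith
    rw [e4] at e3
    linarith

lemma aux_tel (d : ℕ → ℝ) (p : ℕ) : ∑ k ∈ Finset.range p, (d k - d (k + 1)) = d 0 - d p := by
  exact Finset.sum_range_sub' d p

lemma aux_blocks {n : ℕ} (s : ℕ → Finset (Fin n)) (hs : Monotone s) :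
    ∀ i j : ℕ, i ≠ j → Disjoint (s (i + 1) \ s i) (s (j + 1) \ s j) := by
  have : ∀ i j : ℕ, i < j → Disjoint (s (i + 1) \ s i) (s (j + 1) \ s j) := by
    intro i j hij
    rw [Finset.disjoint_left]
    intro x hx hy
    simp only [Finset.mem_sdiff] at hx hy
    exact hy.2 (hs (show i + 1 ≤ j by omega) hx.1)
  intro i j hij
  rcases lt_or_gt_of_ne hij with h | h
  · exact this i j h
  · exact (this j i h).symm

/-- Lower level sets. -/
lemma aux_lower {n : ℕ} (m : ℕ) (s : ℕ → Finset (Fin n)) (hs : Monotone s) (d : ℕ → ℝ)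
    (z : Fin n → ℝ) (hz0 : ∀ j, 0 ≤ z j)
    (hcov : ∀ k, k < m → d k - d (k + 1) ≤ ∑ j ∈ s (k + 1) \ s k, z j) (T : Finset (Fin n)) :
    ∑ k ∈ (Finset.range m).filter (fun k => s (k + 1) \ s k ⊆ T), (d k - d (k + 1))
      ≤ ∑ j ∈ T, z j := by
  have hK : ((Finset.range m).filter (fun k => s (k + 1) \ s k ⊆ T)).biUnion
      (fun k => s (k + 1) \ s k) ⊆ T := by
    intro j hj
    rw [Finset.mem_biUnion] at hj
    obtain ⟨k, hk, hj⟩ := hj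
    exact (Finset.mem_filter.mp hk).2 hj
  calc _ ≤ ∑ k ∈ (Finset.range m).filter (fun k => s (k + 1) \ s k ⊆ T),
        ∑ j ∈ s (k + 1) \ s k, z j := by
        apply Finset.sum_le_sum
        intro k hk
        exact hcov k (by simpa using (Finset.mem_filter.mp hk).1)
    _ = ∑ j ∈ ((Finset.range m).filter (fun k => s (k + 1) \ s k ⊆ T)).biUnion
      (fun k => s (k + 1) \ s k), z j := by
        rw [Finset.sum_biUnion]
        intro i _ j _ hij
        exact aux_blocks s hs i j hij
    _ ≤ _ := Finset.sum_le_sum_of_subset_of_nonneg hK (fun j _ _ => hz0 j)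

/-- Upper level sets. -/
lemma aux_upper {n : ℕ} (m u : ℕ) (hu : 1 ≤ u) (s : ℕ → Finset (Fin n)) (hs : Monotone s)
    (hs0 : s 0 = ∅) (hsm : s (m + 1) = univ) (d : ℕ → ℝ) (hd0 : d 0 = 1) (hdm : d (m + 1) = 0)
    (hdmono : ∀ k, k ≤ m → d (k + 1) ≤ d k)
    (z : Fin n → ℝ) (hz0 : ∀ j, 0 ≤ z j) (hz1 : ∀ j, z j ≤ 1) (hzu : ∑ j, z j ≤ u)
    (hz : ∀ i, 1 ≤ i → i ≤ m → ∀ j ∈ s i, z j + d i ≤ 1)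
    (hcov : ∀ k, k < m → d k - d (k + 1) ≤ ∑ j ∈ s (k + 1) \ s k, z j)
    (hmix : ∀ p : ℕ, 1 ≤ p → p ≤ m → ∀ S' : Finset (Fin n), (S' \ s p).card ≤ u - 1 →
      ∑ j ∈ S', z j ≤ u * (1 - d p) +
        ∑ k ∈ Finset.Icc p m, ((S' \ s k).card : ℝ) * (d k - d (k + 1)))
    (T : Finset (Fin n)) (h : ℕ → ℕ)
    (hh : ∀ k, k < m → min (if (s (k + 1) \ s k) ∩ T = ∅ then u - 1 else u) (T \ s k).card ≤ h k)
    (hhm : min u (T \ s m).card ≤ h m) :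
    ∑ j ∈ T, z j ≤ ∑ k ∈ Finset.range (m + 1), (d k - d (k + 1)) * (h k : ℝ) := by
  classical
  have hTm : (T \ s (m + 1)).card = 0 := by
    rw [hsm, Finset.card_eq_zero, Finset.sdiff_eq_empty_iff_subset]; exact Finset.subset_univ _
  have hex : ∃ p, (T \ s p).card ≤ u - 1 := ⟨m + 1, by omega⟩
  set p := Nat.find hex with hpdef
  have hp1 : (T \ s p).card ≤ u - 1 := Nat.find_spec hex
  have hp2 : ∀ k, k < p → u ≤ (T \ s k).card := by
    intro k hk
    have := Nat.find_min hex hk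
    omega
  have hpm : p ≤ m + 1 := Nat.find_min' hex (by omega)
  have hanti : ∀ k l, k ≤ l → (T \ s l).card ≤ (T \ s k).card := fun k l hkl =>
    Finset.card_le_card (Finset.sdiff_subset_sdiff le_rfl (hs hkl))
  let K : Finset ℕ := (Finset.range p).filter (fun k => k < m ∧ (s (k + 1) \ s k) ∩ T = ∅)
  let U : Finset (Fin n) := K.biUnion (fun k => s (k + 1) \ s k)
  have hKp : ∀ k ∈ K, k < p ∧ k < m ∧ (s (k + 1) \ s k) ∩ T = ∅ := by
    intro k hk
    simpa [K] using hk
  have hUs : U ⊆ s p := by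
    intro j hj
    rw [Finset.mem_biUnion] at hj
    obtain ⟨k, hk, hj⟩ := hj
    exact hs (show k + 1 ≤ p from (hKp k hk).1) (Finset.mem_sdiff.mp hj).1
  have hdisj : Disjoint T U := by
    rw [Finset.disjoint_left]
    intro j hj hjU
    rw [Finset.mem_biUnion] at hjU
    obtain ⟨k, hk, hj'⟩ := hjU
    have := (hKp k hk).2.2
    rw [Finset.eq_empty_iff_forall_notMem] at this
    exact this j (Finset.mem_inter.mpr ⟨hj', hj⟩)
  have hT'k : ∀ k, p ≤ k → (T ∪ U) \ s k = T \ s k := by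
    intro k hk
    rw [Finset.union_sdiff_distrib, Finset.sdiff_eq_empty_iff_subset.mpr (hUs.trans (hs hk)),
      Finset.union_empty]
  have hUz : ∑ k ∈ K, (d k - d (k + 1)) ≤ ∑ j ∈ U, z j := by
    rw [Finset.sum_biUnion (fun i _ j _ hij => aux_blocks s hs i j hij)]
    exact Finset.sum_le_sum (fun k hk => hcov k (hKp k hk).2.1)
  have key : ∑ j ∈ T ∪ U, z j ≤ u * (1 - d p) +
        ∑ k ∈ Finset.Icc p m, ((T \ s k).card : ℝ) * (d k - d (k + 1)) := by
    rcases Nat.eq_zero_or_pos p with h0 | hpos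
    · have hU0 : U = ∅ := by
        simp [U, K, h0]
      rw [hU0, Finset.union_empty, h0, hd0,
        aux_abel (fun k => ((T \ s k).card : ℝ)) d m 0 (by omega), hdm, hd0]
      have a1 := aux_dl s hs d z T 0 m (by omega) hz
      have a2 : ∑ j ∈ T \ s m, z j ≤ ∑ j ∈ T \ s m, (1 : ℝ) :=
        Finset.sum_le_sum (fun j _ => hz1 j)
      simp only [Finset.sum_const, nsmul_eq_mul, mul_one] at a2
      have a3 : T \ s 0 = T := by rw [hs0]; simp
      rw [a3] at a1 ⊢
      linarith
    · rcases Nat.lt_or_ge m p with hlt | hle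
      · have hpe : p = m + 1 := by omega
        rw [hpe, hdm]
        simp only [sub_zero, mul_one]
        rw [Finset.Icc_eq_empty (by omega)]
        have : ∑ j ∈ T ∪ U, z j ≤ ∑ j, z j :=
          Finset.sum_le_sum_of_subset_of_nonneg (Finset.subset_univ _) (fun j _ _ => hz0 j)
        simp only [Finset.sum_empty]
        linarith
      · have := hmix p hpos hle (T ∪ U) (by rw [hT'k p le_rfl]; exact hp1)
        refine this.trans (le_of_eq ?_)
        congr 1
        apply Finset.sum_congr rfl
        intro k hk
        rw [hT'k k (Finset.mem_Icc.mp hk).1]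
  rw [Finset.sum_union hdisj] at key
  have t1 := aux_tel d p
  rw [hd0] at t1
  have t2 : ∑ k ∈ K, (d k - d (k + 1)) = ∑ k ∈ Finset.range p,
      (if k < m ∧ (s (k + 1) \ s k) ∩ T = ∅ then (d k - d (k + 1)) else 0) := by
    rw [Finset.sum_filter]
  have t3 : Finset.range (m + 1) = Finset.range p ∪ Finset.Icc p m := by
    ext k; simp only [Finset.mem_range, Finset.mem_union, Finset.mem_Icc]; omega
  have t4 : Disjoint (Finset.range p) (Finset.Icc p m) := by
    rw [Finset.disjoint_left]; intro k; simp only [Finset.mem_range, Finset.mem_Icc]; omega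
  rw [t3, Finset.sum_union t4]
  have b1 : ∑ k ∈ Finset.Icc p m, ((T \ s k).card : ℝ) * (d k - d (k + 1)) ≤
      ∑ k ∈ Finset.Icc p m, (d k - d (k + 1)) * (h k : ℝ) := by
    apply Finset.sum_le_sum
    intro k hk
    rw [Finset.mem_Icc] at hk
    have hck := hanti p k hk.1
    have : (T \ s k).card ≤ h k := by
      rcases Nat.lt_or_ge k m with hkm | hkm
      · have := hh k hkm
        split_ifs at this <;> omega
      · have : k = m := by omega
        subst this
        omega
    have h' : ((T \ s k).card : ℝ) ≤ h k := by exact_mod_cast this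
    rw [mul_comm]
    exact mul_le_mul_of_nonneg_left h' (by linarith [hdmono k hk.2])
  have b2 : ∑ k ∈ Finset.range p, ((u : ℝ) * (d k - d (k + 1)) -
      (if k < m ∧ (s (k + 1) \ s k) ∩ T = ∅ then (d k - d (k + 1)) else 0)) ≤
      ∑ k ∈ Finset.range p, (d k - d (k + 1)) * (h k : ℝ) := by
    apply Finset.sum_le_sum
    intro k hk
    rw [Finset.mem_range] at hk
    have hcu := hp2 k hk
    have hnn : 0 ≤ d k - d (k + 1) := by linarith [hdmono k (by omega)]
    split_ifs with hc
    · have := hh k hc.1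
      rw [if_pos hc.2] at this
      have : u ≤ h k + 1 := by omega
      have h' : (u : ℝ) ≤ h k + 1 := by exact_mod_cast this
      nlinarith
    · have : u ≤ h k := by
        rcases Nat.lt_or_ge k m with hkm | hkm
        · have := hh k hkm
          rw [if_neg (fun h => hc ⟨hkm, h⟩)] at this
          omega
        · have : k = m := by omega
          subst this
          omega
      have h' : (u : ℝ) ≤ h k := by exact_mod_cast this
      nlinarith
  rw [Finset.sum_sub_distrib, ← Finset.mul_sum, t1, ← t2] at b2
  linarith

lemma aux_mixLe (n m u : ℕ) (S : Fin m → Finset (Fin n)) (p : ℕ) (hp : p ≤ m)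
    (S' : Finset (Fin n)) (zd : (Fin n → ℝ) × (Fin m → ℝ)) (hdm : dd m zd.2 (m + 1) = 0) :
    MixLe n m u S p S' zd ↔ ∑ j ∈ S', zd.1 j ≤ u * (1 - dd m zd.2 p) +
        ∑ k ∈ Finset.Icc p m, ((S' \ SS n m S k).card : ℝ) *
          (dd m zd.2 k - dd m zd.2 (k + 1)) := by
  rw [aux_abel (fun k => ((S' \ SS n m S k).card : ℝ)) (dd m zd.2) m p hp, hdm]
  unfold MixLe mixLeLHS
  constructor <;> intro h <;> linarith

lemma dd_zero (m : ℕ) (δ : Fin m → ℝ) : dd m δ 0 = 1 := by simp [dd]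
lemma dd_top (m : ℕ) (δ : Fin m → ℝ) : dd m δ (m + 1) = 0 := by simp [dd]
lemma dd_succ (m : ℕ) (δ : Fin m → ℝ) (i : Fin m) : dd m δ (i + 1) = δ i := by
  have := i.2
  simp [dd]
lemma SS_zero (n m : ℕ) (S : Fin m → Finset (Fin n)) : SS n m S 0 = ∅ := by simp [SS]
lemma SS_top (n m : ℕ) (S : Fin m → Finset (Fin n)) : SS n m S (m + 1) = univ := by simp [SS]
lemma SS_succ (n m : ℕ) (S : Fin m → Finset (Fin n)) (i : Fin m) : SS n m S (i + 1) = S i := by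
  have := i.2
  simp [SS]

lemma SS_mono (n m : ℕ) (S : Fin m → Finset (Fin n))
    (hnested : ∀ i j : Fin m, i < j → S i ⊂ S j) : Monotone (SS n m S) := by
  apply monotone_nat_of_le_succ
  intro k
  rcases Nat.eq_zero_or_pos k with rfl | hk
  · rw [SS_zero]; exact Finset.empty_subset _
  · by_cases h : k + 1 ≤ m
    · have e1 := SS_succ n m S ⟨k, by omega⟩
      have e2 := SS_succ n m S ⟨k - 1, by omega⟩
      simp only [Nat.sub_add_cancel hk] at e1 e2
      rw [e1, e2]
      exact (hnested _ _ (by simp [Fin.lt_def]; omega)).subset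
    · have : SS n m S (k + 1) = univ := by
        simp only [SS]
        rw [dif_neg (by omega), if_neg (by omega)]
      rw [this]; exact Finset.subset_univ _

lemma SS_block (n m : ℕ) (S : Fin m → Finset (Fin n))
    (hnested : ∀ i j : Fin m, i < j → S i ⊂ S j) (hS1 : 2 ≤ (SS n m S 1).card) (k : ℕ)
    (hk : k < m) : (SS n m S (k + 1) \ SS n m S k).Nonempty := by
  rcases Nat.eq_zero_or_pos k with rfl | hk0
  · rw [SS_zero, Finset.sdiff_empty]
    apply Finset.card_pos.mp
    simpa using (by omega : 0 < (SS n m S 1).card)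
  · have e1 := SS_succ n m S ⟨k, by omega⟩
    have e2 := SS_succ n m S ⟨k - 1, by omega⟩
    simp only [Nat.sub_add_cancel hk0] at e1 e2
    rw [e1, e2, Finset.sdiff_nonempty]
    exact (hnested _ _ (by simp [Fin.lt_def]; omega)).not_subset

lemma dd_comb (m : ℕ) (δ δ' : Fin m → ℝ) (a b : ℝ) (hab : a + b = 1) (k : ℕ) :
    dd m (a • δ + b • δ') k = a * dd m δ k + b * dd m δ' k := by
  unfold dd
  split_ifs
  · simp
  · linarith
  · simp

lemma aux_sum_comb {n : ℕ} (z z' : Fin n → ℝ) (a b : ℝ) (T : Finset (Fin n)) :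
    ∑ j ∈ T, (a * z j + b * z' j) = a * ∑ j ∈ T, z j + b * ∑ j ∈ T, z' j := by
  rw [Finset.sum_add_distrib, Finset.mul_sum, Finset.mul_sum]

lemma aux_le_comb {a b x y X Y : ℝ} (ha : 0 ≤ a) (hb : 0 ≤ b) (h1 : x ≤ X) (h2 : y ≤ Y) :
    a * x + b * y ≤ a * X + b * Y :=
  add_le_add (mul_le_mul_of_nonneg_left h1 ha) (mul_le_mul_of_nonneg_left h2 hb)

lemma aux_convex (n m u : ℕ) (S : Fin m → Finset (Fin n)) :
    Convex ℝ {zd : (Fin n → ℝ) × (Fin m → ℝ) |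
        NestedLin n m 0 u S zd ∧
        ∀ p : ℕ, 1 ≤ p → p ≤ m → ∀ S' : Finset (Fin n),
          (S' \ SS n m S p).card ≤ u - 1 → MixLe n m u S p S' zd} := by
  rintro ⟨z, δ⟩ ⟨⟨h1, h2, h3, h4, h5, h6, h7, h8, h9⟩, h10⟩ ⟨z', δ'⟩
    ⟨⟨g1, g2, g3, g4, g5, g6, g7, g8, g9⟩, g10⟩ a b ha hb hab
  have hone : ∀ x : ℝ, x = a * x + b * x := fun x => by rw [← add_mul, hab, one_mul]
  simp only [Prod.smul_mk, Prod.mk_add_mk, Set.mem_ofPred_eq, NestedLin, dd_comb m δ δ' a b hab,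
    Pi.add_apply, Pi.smul_apply, smul_eq_mul, aux_sum_comb] at *
  refine ⟨⟨?_, ?_, ?_, ?_, ?_, ?_, ?_, ?_, ?_⟩, ?_⟩
  · have := aux_le_comb ha hb h1 g1
    linarith [hone ((0 : ℕ) : ℝ)]
  · have := aux_le_comb ha hb h2 g2
    linarith [hone (u : ℝ)]
  · intro i j hj
    have := aux_le_comb ha hb (h3 i j hj) (g3 i j hj)
    linarith [hone 1]
  · have := aux_le_comb ha hb h4 g4
    linarith [hone 1]
  · have := aux_le_comb ha hb h5 g5
    linarith [hone 0]
  · intro j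
    have := aux_le_comb ha hb (h6 j) (g6 j)
    linarith [hone 0]
  · intro j hj
    have := aux_le_comb ha hb (h7 j hj) (g7 j hj)
    linarith [hone 1]
  · intro i hi hi'
    exact aux_le_comb ha hb (h8 i hi hi') (g8 i hi hi')
  · intro i hi hi'
    have := aux_le_comb ha hb (h9 i hi hi') (g9 i hi hi')
    linarith
  · intro p hp hpm S' hS'
    have := aux_le_comb ha hb (h10 p hp hpm S' hS') (g10 p hp hpm S' hS')
    unfold MixLe mixLeLHS
    simp only [dd_comb m δ δ' a b hab,
      Pi.add_apply, Pi.smul_apply, smul_eq_mul, aux_sum_comb]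
    simp only [mixLeLHS] at this
    have e : ∑ i ∈ Finset.Icc (p + 1) m,
        (((S' \ SS n m S (i - 1)).card : ℝ) - ((S' \ SS n m S i).card : ℝ)) *
          (a * dd m δ i + b * dd m δ' i) =
      a * ∑ i ∈ Finset.Icc (p + 1) m,
        (((S' \ SS n m S (i - 1)).card : ℝ) - ((S' \ SS n m S i).card : ℝ)) * dd m δ i +
      b * ∑ i ∈ Finset.Icc (p + 1) m,
        (((S' \ SS n m S (i - 1)).card : ℝ) - ((S' \ SS n m S i).card : ℝ)) * dd m δ' i := by
      rw [Finset.mul_sum, Finset.mul_sum, ← Finset.sum_add_distrib]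
      exact Finset.sum_congr rfl (fun i _ => by ring)
    rw [e]
    linarith [hone (u : ℝ)]

lemma aux_forward (n m u : ℕ) (S : Fin m → Finset (Fin n))
    (hnested : ∀ i j : Fin m, i < j → S i ⊂ S j) (hm : 0 < m)
    (zd : (Fin n → ℝ) × (Fin m → ℝ)) (hx : zd ∈ Xset n m 0 u S) :
    NestedLin n m 0 u S zd ∧
        ∀ p : ℕ, 1 ≤ p → p ≤ m → ∀ S' : Finset (Fin n),
          (S' \ SS n m S p).card ≤ u - 1 → MixLe n m u S p S' zd := by
  obtain ⟨z, δ⟩ := zd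
  obtain ⟨hz, hδ, hprod, hl, hu⟩ := hx
  simp only at hz hδ hprod hl hu
  have hs := SS_mono n m S hnested
  have hz0 : ∀ j, 0 ≤ z j := fun j => by rcases hz j with h | h <;> rw [h] <;> norm_num
  have hz1 : ∀ j, z j ≤ 1 := fun j => by rcases hz j with h | h <;> rw [h] <;> norm_num
  have hd : ∀ k, k ≤ m → (dd m δ k = 1 ∧ ∀ j ∈ SS n m S k, z j = 0) ∨
      (dd m δ k = 0 ∧ ∃ j ∈ SS n m S k, z j = 1) := by
    intro k hk
    rcases Nat.eq_zero_or_pos k with rfl | hk0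
    · left; rw [dd_zero, SS_zero]; simp
    · have e1 := SS_succ n m S ⟨k - 1, by omega⟩
      have e2 := dd_succ m δ ⟨k - 1, by omega⟩
      simp only [Nat.sub_add_cancel hk0] at e1 e2
      rw [e1, e2, hprod]
      by_cases hex : ∃ j ∈ S ⟨k - 1, by omega⟩, z j = 1
      · right
        refine ⟨?_, hex⟩
        obtain ⟨j, hj, hj1⟩ := hex
        exact Finset.prod_eq_zero hj (by rw [hj1]; ring)
      · left
        have h0 : ∀ j ∈ S ⟨k - 1, by omega⟩, z j = 0 := by
          intro j hj
          rcases hz j with h | h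
          · exact h
          · exact absurd ⟨j, hj, h⟩ hex
        refine ⟨?_, h0⟩
        apply Finset.prod_eq_one
        intro j hj
        rw [h0 j hj]; ring
  have hsum1 : ∀ (T : Finset (Fin n)) (j : Fin n), j ∈ T → z j ≤ ∑ j ∈ T, z j :=
    fun T j hj => Finset.single_le_sum (f := z) (fun i _ => hz0 i) hj
  have hsum0 : ∀ (T : Finset (Fin n)), 0 ≤ ∑ j ∈ T, z j :=
    fun T => Finset.sum_nonneg (fun i _ => hz0 i)
  have hzd : ∀ i, i ≤ m → ∀ j ∈ SS n m S i, z j + dd m δ i ≤ 1 := by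
    intro i hi j hj
    rcases hd i hi with ⟨h, h'⟩ | ⟨h, h'⟩
    · rw [h, h' j hj]; norm_num
    · rw [h]; linarith [hz1 j]
  have hmono : ∀ i l, i ≤ l → l ≤ m → dd m δ l ≤ dd m δ i := by
    intro i l hil hl
    rcases hd i (by omega) with ⟨h, h'⟩ | ⟨h, j, hj, hj1⟩
    · rcases hd l hl with ⟨g, _⟩ | ⟨g, _⟩ <;> rw [g, h] <;> norm_num
    · have := hzd l hl j (hs hil hj)
      linarith
  have hd0 : ∀ k, k ≤ m → 0 ≤ dd m δ k := by
    intro k hk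
    rcases hd k hk with ⟨h, _⟩ | ⟨h, _⟩ <;> rw [h] <;> norm_num
  have hcov : ∀ i, i + 1 ≤ m →
      dd m δ i - dd m δ (i + 1) ≤ ∑ j ∈ SS n m S (i + 1) \ SS n m S i, z j := by
    intro i hi
    rcases hd i (by omega) with ⟨h, h'⟩ | ⟨h, _⟩
    · rcases hd (i + 1) hi with ⟨g, _⟩ | ⟨g, j, hj, hj1⟩
      · rw [h, g]; linarith [hsum0 (SS n m S (i + 1) \ SS n m S i)]
      · have hji : j ∉ SS n m S i := by
          intro hc
          have := h' j hc
          linarith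
        have := hsum1 (SS n m S (i + 1) \ SS n m S i) j (Finset.mem_sdiff.mpr ⟨hj, hji⟩)
        rw [h, g]; linarith
    · linarith [hsum0 (SS n m S (i + 1) \ SS n m S i), hd0 (i + 1) hi]
  refine ⟨⟨hl, hu, ?_, ?_, hd0 m le_rfl, hz0, fun j _ => hz1 j,
    fun i _ hi => hmono i (i + 1) (by omega) hi, fun i _ hi => hcov i hi⟩, ?_⟩
  · intro i j hj
    have := hzd (i + 1) (by omega) j (by rw [SS_succ]; exact hj)
    rw [dd_succ] at this
    exact this
  · have := hcov 0 (by omega)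
    rw [dd_zero, SS_zero, Finset.sdiff_empty] at this
    simp only [zero_add] at this
    simp only
    linarith
  · intro p hp hpm S' _
    unfold MixLe mixLeLHS
    simp only
    rcases hd p hpm with ⟨h, h'⟩ | ⟨h, _⟩
    · have a1 := aux_dl (SS n m S) hs (dd m δ) z S' p m hpm (fun i _ hi => hzd i hi)
      have a2 : ∑ j ∈ S' \ SS n m S m, z j ≤ ∑ j ∈ S' \ SS n m S m, (1 : ℝ) :=
        Finset.sum_le_sum (fun j _ => hz1 j)
      simp only [Finset.sum_const, nsmul_eq_mul, mul_one] at a2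
      have a3 : ∑ j ∈ S' \ SS n m S p, z j = ∑ j ∈ S', z j := by
        apply Finset.sum_subset Finset.sdiff_subset
        intro j hj hj'
        apply h'
        by_contra hc
        exact hj' (Finset.mem_sdiff.mpr ⟨hj, hc⟩)
      rw [h]
      linarith
    · have a1 : ∑ i ∈ Finset.Icc (p + 1) m,
        (((S' \ SS n m S (i - 1)).card : ℝ) - ((S' \ SS n m S i).card : ℝ)) * dd m δ i = 0 := by
        apply Finset.sum_eq_zero
        intro i hi
        rw [Finset.mem_Icc] at hi
        have g1 := hmono p i (by omega) hi.2
        have g2 := hd0 i hi.2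
        have : dd m δ i = 0 := by linarith
        rw [this, mul_zero]
      have a2 : ∑ j ∈ S', z j ≤ ∑ j, z j :=
        Finset.sum_le_sum_of_subset_of_nonneg (Finset.subset_univ _) (fun j _ _ => hz0 j)
      rw [a1, h]
      linarith

lemma aux_point (n m u : ℕ) (S : Fin m → Finset (Fin n))
    (hs : Monotone (SS n m S)) (k : ℕ) (A : Finset (Fin n))
    (hA : Disjoint A (SS n m S k)) (hAu : A.card ≤ u)
    (hAe : k < m → ∃ e ∈ A, e ∈ SS n m S (k + 1)) :
    ((fun j => if j ∈ A then (1 : ℝ) else 0, fun i : Fin m => if i.val < k then (1 : ℝ) else 0) :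
      (Fin n → ℝ) × (Fin m → ℝ)) ∈ Xset n m 0 u S := by
  refine ⟨?_, ?_, ?_, ?_, ?_⟩
  · intro j; simp only; split_ifs <;> simp
  · intro j; simp only; split_ifs <;> simp
  · intro i
    simp only
    split_ifs with hi
    · symm
      apply Finset.prod_eq_one
      intro j hj
      have : j ∉ A := by
        intro hjA
        rw [← SS_succ n m S i] at hj
        exact Finset.disjoint_left.mp hA hjA (hs (by omega) hj)
      simp [this]
    · symm
      obtain ⟨e, he, he'⟩ := hAe (by omega)
      apply Finset.prod_eq_zero (i := e)
      · rw [← SS_succ n m S i]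
        exact hs (by omega) he'
      · simp [he]
  · simp
  · simpa using hAu

lemma aux_backward (n m u : ℕ) (S : Fin m → Finset (Fin n))
    (hnested : ∀ i j : Fin m, i < j → S i ⊂ S j) (hm : 0 < m) (hu : 2 ≤ u)
    (hS1 : 2 ≤ (SS n m S 1).card) (z : Fin n → ℝ) (δ : Fin m → ℝ)
    (hlin : NestedLin n m 0 u S (z, δ))
    (hmix : ∀ p : ℕ, 1 ≤ p → p ≤ m → ∀ S' : Finset (Fin n),
          (S' \ SS n m S p).card ≤ u - 1 → MixLe n m u S p S' (z, δ))
    (α : Fin n → ℝ) :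
    ∃ z' : Fin n → ℝ, (z', δ) ∈ convexHull ℝ (Xset n m 0 u S) ∧
      ∑ j, α j * z j ≤ ∑ j, α j * z' j := by
  classical
  obtain ⟨-, h2, h3, h4, h5, h6, h7, h8, h9⟩ := hlin
  simp only at h2 h3 h4 h5 h6 h7 h8 h9
  have hs := SS_mono n m S hnested
  set s := SS n m S with hsdef
  set d := dd m δ with hddef
  have hd0 : d 0 = 1 := dd_zero m δ
  have hdm : d (m + 1) = 0 := dd_top m δ
  have hs0 : s 0 = ∅ := SS_zero n m S
  have hsm : s (m + 1) = univ := SS_top n m S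
  have hzd : ∀ i, 1 ≤ i → i ≤ m → ∀ j ∈ s i, z j + d i ≤ 1 := by
    intro i hi him j hj
    have e1 := SS_succ n m S ⟨i - 1, by omega⟩
    have e2 := dd_succ m δ ⟨i - 1, by omega⟩
    simp only [Nat.sub_add_cancel hi] at e1 e2
    rw [hsdef, e1] at hj
    rw [hddef, e2]
    exact h3 _ j hj
  have hdmono : ∀ k, k ≤ m → d (k + 1) ≤ d k := by
    intro k hk
    rcases Nat.eq_zero_or_pos k with rfl | hk0
    · obtain ⟨j, hj⟩ : (s 1).Nonempty := Finset.card_pos.mp (by omega)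
      have := hzd 1 le_rfl (by omega) j hj
      rw [hd0]
      simp only [zero_add]
      linarith [h6 j]
    · rcases Nat.lt_or_ge k m with h | h
      · exact h8 k hk0 h
      · have : k = m := by omega
        subst this
        rw [hdm]; exact h5
  have hcov : ∀ k, k < m → d k - d (k + 1) ≤ ∑ j ∈ s (k + 1) \ s k, z j := by
    intro k hk
    rcases Nat.eq_zero_or_pos k with rfl | hk0
    · rw [hs0, hd0, Finset.sdiff_empty]
      simp only [zero_add]
      linarith
    · exact h9 k hk0 hk
  have hz1 : ∀ j, z j ≤ 1 := by
    intro j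
    by_cases hj : j ∈ s m
    · linarith [hzd m (by omega) le_rfl j hj]
    · exact h7 j hj
  have hmix' : ∀ p : ℕ, 1 ≤ p → p ≤ m → ∀ S' : Finset (Fin n), (S' \ s p).card ≤ u - 1 →
      ∑ j ∈ S', z j ≤ u * (1 - d p) +
        ∑ k ∈ Finset.Icc p m, ((S' \ s k).card : ℝ) * (d k - d (k + 1)) := by
    intro p hp hpm S' hS'
    exact (aux_mixLe n m u S p hpm S' (z, δ) (dd_top m δ)).mp (hmix p hp hpm S' hS')
  -- choice of the sets
  have hA : ∀ k : ℕ, ∃ A : Finset (Fin n), k ≤ m → (Disjoint A (s k) ∧ A.card ≤ u ∧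
      (k < m → ∃ e ∈ A, e ∈ s (k + 1)) ∧
      (∀ c : ℝ, 0 < c → min (if k < m ∧ (s (k + 1) \ s k) ∩ univ.filter (fun j => c ≤ α j) = ∅
          then u - 1 else u)
        (univ.filter (fun j => c ≤ α j) \ s k).card
        ≤ (A ∩ univ.filter (fun j => c ≤ α j)).card) ∧
      (∀ c : ℝ, 0 < c → (A ∩ univ.filter (fun j => c ≤ - α j)).card ≤
        if k < m ∧ s (k + 1) \ s k ⊆ univ.filter (fun j => c ≤ - α j) then 1 else 0)) := by
    intro k
    have hcompl : ∀ T : Finset (Fin n), T \ s k = T ∩ (s k)ᶜ := by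
      intro T; ext j; simp
    rcases Nat.lt_or_ge k m with hk | hk
    · obtain ⟨A, a1, a2, ⟨e, a3, a3'⟩, a4, a5⟩ := aux_top' α u (by omega) ((s k)ᶜ)
        (s (k + 1) \ s k) (by rw [hcompl]; exact Finset.inter_subset_right)
        (SS_block n m S hnested hS1 k hk)
      refine ⟨A, fun _ => ⟨?_, a2, fun _ => ⟨e, a3, (Finset.mem_sdiff.mp a3').1⟩, ?_, ?_⟩⟩
      · rw [Finset.disjoint_left]
        intro j hj
        simpa using a1 hj
      · intro c hc
        simpa only [hk, true_and, hcompl (univ.filter (fun j => c ≤ α j))] using a4 c hc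
      · intro c hc
        simpa only [hk, true_and] using a5 c hc
    · obtain ⟨A, a1, a2, a3, a4⟩ := aux_top α u ((s k)ᶜ)
      refine ⟨A, fun _ => ⟨?_, a2, fun h => absurd h (by omega), ?_, ?_⟩⟩
      · rw [Finset.disjoint_left]
        intro j hj
        simpa using a1 hj
      · intro c hc
        have := a4 c hc
        rw [if_neg (by omega)]
        convert this using 3
        · ext j; simp [and_comm]
        · ext j; simp
      · intro c hc
        rw [if_neg (by omega)]
        simp only [nonpos_iff_eq_zero, Finset.card_eq_zero]
        rw [Finset.eq_empty_iff_forall_notMem]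
        intro j hj
        simp only [Finset.mem_inter, Finset.mem_filter, Finset.mem_univ, true_and] at hj
        linarith [a3 j hj.1]
  choose A hA using hA
  let z' : Fin n → ℝ := fun j =>
    ∑ k ∈ Finset.range (m + 1), (d k - d (k + 1)) * (if j ∈ A k then (1 : ℝ) else 0)
  have hz'T : ∀ T : Finset (Fin n), ∑ j ∈ T, z' j =
      ∑ k ∈ Finset.range (m + 1), (d k - d (k + 1)) * ((A k ∩ T).card : ℝ) := by
    intro T
    simp only [z']
    rw [Finset.sum_comm]
    apply Finset.sum_congr rfl
    intro k _
    rw [← Finset.mul_sum]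
    congr 1
    rw [Finset.sum_boole, Finset.filter_mem_eq_inter, Finset.inter_comm]
  refine ⟨z', ?_, ?_⟩
  · have hmem := (convex_convexHull ℝ (Xset n m 0 u S)).sum_mem
      (t := Finset.range (m + 1)) (w := fun k => d k - d (k + 1))
      (z := fun k => ((fun j => if j ∈ A k then (1 : ℝ) else 0,
        fun i : Fin m => if i.val < k then (1 : ℝ) else 0) : (Fin n → ℝ) × (Fin m → ℝ)))
      (fun k hk => by
        have := hdmono k (by simpa [Nat.lt_succ_iff] using hk)
        linarith)
      (by rw [aux_tel, hd0, hdm]; ring)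
      (fun k hk => by
        have hk' : k ≤ m := by simpa [Nat.lt_succ_iff] using hk
        obtain ⟨b1, b2, b3, -, -⟩ := hA k hk'
        exact subset_convexHull ℝ _ (aux_point n m u S hs k (A k) b1 b2 b3))
    convert hmem using 1
    apply Prod.ext
    · rw [Prod.fst_sum]
      ext j
      simp [z', Finset.sum_apply]
    · rw [Prod.snd_sum]
      ext i
      simp only [Finset.sum_apply, Prod.smul_mk, Pi.smul_apply, smul_eq_mul, mul_ite, mul_one,
        mul_zero]
      rw [← Finset.sum_filter]
      have e1 : (Finset.range (m + 1)).filter (fun k => i.val < k) = Finset.Icc (i.val + 1) m := by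
        ext k; simp only [Finset.mem_filter, Finset.mem_range, Finset.mem_Icc]; omega
      rw [e1]
      have := aux_abel (fun _ => (1 : ℝ)) d m (i.val + 1) (by omega)
      simp only [one_mul, sub_self, zero_mul, Finset.sum_const_zero, sub_zero, hdm] at this
      rw [this, hddef, dd_succ]
  · have hup : ∀ c : ℝ, 0 < c →
        ∑ j ∈ univ.filter (fun j => c ≤ α j), (z j - z' j) ≤ 0 := by
      intro c hc
      rw [Finset.sum_sub_distrib, hz'T]
      have := aux_upper m u (by omega) s hs hs0 hsm d hd0 hdm hdmono z h6 hz1 h2 hzd hcov hmix'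
        (univ.filter (fun j => c ≤ α j))
        (fun k => (A k ∩ univ.filter (fun j => c ≤ α j)).card)
        (fun k hk => by
          have := (hA k hk.le).2.2.2.1 c hc
          simpa only [hk, true_and] using this)
        (by
          have := (hA m le_rfl).2.2.2.1 c hc
          rw [if_neg (by omega)] at this
          exact this)
      linarith
    have hlow : ∀ c : ℝ, 0 < c →
        ∑ j ∈ univ.filter (fun j => c ≤ - α j), (z' j - z j) ≤ 0 := by
      intro c hc
      rw [Finset.sum_sub_distrib, hz'T]
      have l1 := aux_lower m s hs d z h6 hcov (univ.filter (fun j => c ≤ - α j))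
      have l2 : ∑ k ∈ Finset.range (m + 1), (d k - d (k + 1)) *
          ((A k ∩ univ.filter (fun j => c ≤ - α j)).card : ℝ) ≤
          ∑ k ∈ Finset.range (m + 1),
            (if k < m ∧ s (k + 1) \ s k ⊆ univ.filter (fun j => c ≤ - α j) then
              (d k - d (k + 1)) else 0) := by
        apply Finset.sum_le_sum
        intro k hk
        have hk' : k ≤ m := by simpa [Nat.lt_succ_iff] using hk
        have hb := (hA k hk').2.2.2.2 c hc
        have hnn : 0 ≤ d k - d (k + 1) := by linarith [hdmono k hk']
        split_ifs at hb ⊢ with hcond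
        · have h' : ((A k ∩ univ.filter (fun j => c ≤ - α j)).card : ℝ) ≤ 1 := by
            exact_mod_cast hb
          nlinarith
        · have h' : (A k ∩ univ.filter (fun j => c ≤ - α j)).card = 0 := by omega
          rw [h']; simp
      have l3 : ∑ k ∈ Finset.range (m + 1),
            (if k < m ∧ s (k + 1) \ s k ⊆ univ.filter (fun j => c ≤ - α j) then
              (d k - d (k + 1)) else 0) =
          ∑ k ∈ (Finset.range m).filter
            (fun k => s (k + 1) \ s k ⊆ univ.filter (fun j => c ≤ - α j)),
              (d k - d (k + 1)) := by
        rw [← Finset.sum_filter]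
        apply Finset.sum_congr _ (fun _ _ => rfl)
        ext k
        simp only [Finset.mem_filter, Finset.mem_range]
        constructor
        · rintro ⟨_, b, c⟩; exact ⟨b, c⟩
        · rintro ⟨b, c⟩; exact ⟨by omega, b, c⟩
      linarith
    have p1 := aux_layer (fun j => z j - z' j) _ (fun j => max (α j) 0)
      (fun j => le_max_right _ _) le_rfl (by
        intro c hc
        convert hup c hc using 2
        ext j
        simp only [Finset.mem_filter, Finset.mem_univ, true_and]
        rw [le_max_iff]
        exact ⟨fun h => h.resolve_right (by linarith), Or.inl⟩)
    have p2 := aux_layer (fun j => z' j - z j) _ (fun j => max (- α j) 0)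
      (fun j => le_max_right _ _) le_rfl (by
        intro c hc
        convert hlow c hc using 2
        ext j
        simp only [Finset.mem_filter, Finset.mem_univ, true_and]
        rw [le_max_iff]
        exact ⟨fun h => h.resolve_right (by linarith), Or.inl⟩)
    have p3 : ∑ j, α j * z j - ∑ j, α j * z' j =
        ∑ j, max (α j) 0 * (z j - z' j) + ∑ j, max (- α j) 0 * (z' j - z j) := by
      rw [← Finset.sum_sub_distrib, ← Finset.sum_add_distrib]
      apply Finset.sum_congr rfl
      intro j _
      rcases le_total (α j) 0 with h | h
      · rw [max_eq_right h, max_eq_left (by linarith)]; ring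
      · rw [max_eq_left h, max_eq_right (by linarith)]; ring
    linarith

lemma Xset_finite (n m u : ℕ) (S : Fin m → Finset (Fin n)) : (Xset n m 0 u S).Finite := by
  have h1 : (Set.pi Set.univ (fun _ : Fin n => ({0, 1} : Set ℝ))).Finite :=
    Set.Finite.pi' (fun _ => by simp) |>.subset (fun f hf j => hf j (Set.mem_univ j))
  have h2 : (Set.pi Set.univ (fun _ : Fin m => ({0, 1} : Set ℝ))).Finite :=
    Set.Finite.pi' (fun _ => by simp) |>.subset (fun f hf j => hf j (Set.mem_univ j))
  apply (h1.prod h2).subset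
  rintro ⟨z, δ⟩ ⟨a, b, -⟩
  exact ⟨fun j _ => by simpa using a j, fun j _ => by simpa using b j⟩

theorem stmt11 (n m l u : ℕ) (S : Fin m → Finset (Fin n))
    (hn : 0 < n) (hm : 0 < m) (hu : 2 ≤ u) (hlu : l < u)
    (hnested : ∀ i j : Fin m, i < j → S i ⊂ S j)
    (hS1 : 2 ≤ (SS n m S 1).card)
    (hSm : l ≤ n - (SS n m S m).card)
    :
    convexHull ℝ (Xset n m 0 u S) =
      {zd : (Fin n → ℝ) × (Fin m → ℝ) |
        NestedLin n m 0 u S zd ∧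
        ∀ p : ℕ, 1 ≤ p → p ≤ m → ∀ S' : Finset (Fin n),
          (S' \ SS n m S p).card ≤ u - 1 → MixLe n m u S p S' zd} := by
  apply Set.Subset.antisymm
  · exact convexHull_min (fun zd hx => aux_forward n m u S hnested hm zd hx)
      (aux_convex n m u S)
  · rintro ⟨z, δ⟩ ⟨hlin, hmix⟩
    by_contra hnot
    obtain ⟨f, c, hf1, hf2⟩ := geometric_hahn_banach_closed_point
      (convex_convexHull ℝ (Xset n m 0 u S))
      ((Xset_finite n m u S).isCompact_convexHull (𝕜 := ℝ)).isClosed hnot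
    obtain ⟨z', hz', hle⟩ := aux_backward n m u S hnested hm hu hS1 z δ hlin hmix
      (fun j => f (Pi.single j 1, 0))
    have hrep : ∀ w : Fin n → ℝ, f (w, δ) = ∑ j, f (Pi.single j 1, 0) * w j + f (0, δ) := by
      intro w
      have e : ((w, δ) : (Fin n → ℝ) × (Fin m → ℝ)) =
          ∑ j, w j • ((Pi.single j (1 : ℝ), 0) : (Fin n → ℝ) × (Fin m → ℝ)) + (0, δ) := by
        apply Prod.ext
        · simp only [Prod.fst_add, Prod.fst_sum, Prod.smul_mk, add_zero]
          exact pi_eq_sum_univ' w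
        · simp [Prod.snd_sum]
      rw [e, map_add, map_sum]
      congr 1
      apply Finset.sum_congr rfl
      intro j _
      rw [map_smul, smul_eq_mul, mul_comm]
    have a1 := hf1 _ hz'
    rw [hrep] at a1 hf2
    linarith
end
end

section
/- For every p ∈ I and every S' ⊆ J with |S'∪S_p| ≥ n − l + 1, the mixing inequality Mix≥(S',p) holds for every (z,δ) ∈ X^{l,n}. -/
open Finset

noncomputable section

theorem stmt12 (n m l u : ℕ) (S : Fin m → Finset (Fin n))
    (hn : 0 < n) (hm : 0 < m) (hu : 2 ≤ u) (hlu : l < u)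
    (hnested : ∀ i j : Fin m, i < j → S i ⊂ S j)
    (hS1 : 2 ≤ (SS n m S 1).card)
    (hSm : l ≤ n - (SS n m S m).card)
    (p : ℕ) (hp1 : 1 ≤ p) (hpm : p ≤ m)
    (S' : Finset (Fin n)) (hS' : n - l + 1 ≤ (S' ∪ SS n m S p).card) :
    ∀ zd ∈ Xset n m l n S, MixGe n m l S p S' zd := by
  rintro ⟨z, d⟩ ⟨hz, hd, hdp, hl, -⟩
  simp only at hz hd hdp hl
  have key : ∀ k, 1 ≤ k → k ≤ m → dd m d k = 1 →
      ((S' ∪ SS n m S k).card : ℝ) - n + l ≤ ∑ j ∈ S', z j := by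
    intro k h1 h2 h
    have hzero : ∀ j ∈ SS n m S k, z j = 0 := by
      intro j hj
      simp only [dd, SS, h1, h2, and_self, dite_true] at h hj
      rw [hdp] at h
      rcases hz j with h0 | h0
      · exact h0
      · rw [Finset.prod_eq_zero hj (by rw [h0]; ring)] at h
        norm_num at h
    have e1 : ∑ j ∈ S' ∪ SS n m S k, z j = ∑ j ∈ S', z j := by
      symm
      apply Finset.sum_subset Finset.subset_union_left
      intro j hj hj'
      rcases Finset.mem_union.1 hj with h' | h'
      · exact absurd h' hj'
      · exact hzero j h'
    have e2 := Finset.sum_add_sum_compl (S' ∪ SS n m S k) z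
    have e3 : ∑ j ∈ (S' ∪ SS n m S k)ᶜ, z j ≤ ∑ j ∈ (S' ∪ SS n m S k)ᶜ, (1:ℝ) := by
      apply Finset.sum_le_sum
      intro j _
      rcases hz j with h0 | h0 <;> rw [h0]
      norm_num
    have e4 := Finset.card_add_card_compl (S' ∪ SS n m S k)
    rw [Fintype.card_fin] at e4
    have e5 : ((S' ∪ SS n m S k).card : ℝ) + ((S' ∪ SS n m S k)ᶜ.card : ℝ) = n := by
      exact_mod_cast e4
    rw [Finset.sum_const, nsmul_eq_mul, mul_one] at e3
    linarith
  have d01 : ∀ k, 1 ≤ k → k ≤ m → dd m d k = 0 ∨ dd m d k = 1 := by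
    intro k h1 h2
    simp only [dd, h1, h2, and_self, dite_true]
    exact hd _
  have mono : ∀ k, 1 ≤ k → k + 1 ≤ m → dd m d (k+1) = 1 → dd m d k = 1 := by
    intro k h1 h2 h
    have h3 : k ≤ m := by omega
    have h4 : 1 ≤ k + 1 := by omega
    simp only [dd, h1, h2, h3, h4, and_self, dite_true] at h ⊢
    rcases hd ⟨k - 1, by omega⟩ with h0 | h0
    · exfalso
      rw [hdp] at h0
      obtain ⟨j, hj, hj0⟩ := Finset.prod_eq_zero_iff.1 h0
      rw [hdp] at h
      have hs := (hnested ⟨k - 1, by omega⟩ ⟨k + 1 - 1, by omega⟩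
        (by rw [Fin.lt_def]; simp only; omega)).1 hj
      rw [Finset.prod_eq_zero hs hj0] at h
      norm_num at h
    · exact h0
  have hnn : 0 ≤ ∑ j ∈ S', z j := by
    apply Finset.sum_nonneg
    intro j _
    rcases hz j with h0 | h0 <;> rw [h0]
    norm_num
  have main : ∀ k, p ≤ k → k ≤ m →
      ((((S' ∪ SS n m S p).card : ℝ) - (n : ℝ) + (l : ℝ)) * dd m d p
        + ∑ i ∈ Finset.Icc (p + 1) k,
        (((S' ∪ SS n m S i).card : ℝ) - ((S' ∪ SS n m S (i - 1)).card : ℝ)) * dd m d i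
        ≤ ∑ j ∈ S', z j) ∧ (dd m d k = 1 →
      (((S' ∪ SS n m S p).card : ℝ) - (n : ℝ) + (l : ℝ)) * dd m d p
        + ∑ i ∈ Finset.Icc (p + 1) k,
        (((S' ∪ SS n m S i).card : ℝ) - ((S' ∪ SS n m S (i - 1)).card : ℝ)) * dd m d i
        = ((S' ∪ SS n m S k).card : ℝ) - n + l) := by
    intro k hk
    induction k, hk using Nat.le_induction with
    | base =>
      intro h2
      rw [Finset.Icc_eq_empty (by omega), Finset.sum_empty, add_zero]
      rcases d01 p hp1 hpm with h | h
      · rw [h]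
        refine ⟨by linarith, fun h => by norm_num at h⟩
      · have := key p hp1 hpm h
        rw [h]
        exact ⟨by linarith, fun _ => by ring⟩
    | succ k hk ih =>
      intro h2
      obtain ⟨i1, i2⟩ := ih (by omega)
      rw [Finset.sum_Icc_succ_top (by omega)]
      rcases d01 (k+1) (by omega) h2 with h | h
      · rw [h]
        refine ⟨by linarith, fun h => by norm_num at h⟩
      · have h3 := key (k+1) (by omega) h2 h
        have h4 := i2 (mono k (by omega) h2 h)
        rw [h, Nat.add_sub_cancel]
        exact ⟨by linarith, fun _ => by linarith⟩
  have := (main m hpm le_rfl).1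
  simp only [MixGe, mixGeLHS]
  linarith
end
end

section
/- conv(X^{l,u}) equals the set of all (z,δ) ∈ R^n × R^m satisfying: (i) the nested linearization system; (ii) the mixing inequality Mix≤(S',p) for every p ∈ I and every S' ⊆ J with |S'∖S_p| ≤ u − 1; and (iii) the mixing inequality Mix≥(S',p) for every p ∈ I and every S' ⊆ J with |S'∪S_{p−1}| ≤ n − l < |S'∪S_p|. -/
open Finset

noncomputable section

namespace P13

def lam (m : ℕ) (δ : Fin m → ℝ) (k : ℕ) : ℝ := dd m δ k - dd m δ (k + 1)

lemma SS_zero (n m : ℕ) (S : Fin m → Finset (Fin n)) : SS n m S 0 = ∅ := by simp [SS]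

lemma SS_gt (n m : ℕ) (S : Fin m → Finset (Fin n)) (k : ℕ) (hk : m < k) :
    SS n m S k = Finset.univ := by
  have h1 : ¬ (1 ≤ k ∧ k ≤ m) := by omega
  have h2 : k ≠ 0 := by omega
  simp only [SS, h1, h2, dite_false, if_false]

lemma SS_succ (n m : ℕ) (S : Fin m → Finset (Fin n)) (i : Fin m) :
    SS n m S (i.val + 1) = S i := by
  have h1 : (1 ≤ i.val + 1 ∧ i.val + 1 ≤ m) := by omega
  simp only [SS, h1]
  simp

lemma dd_zero (m : ℕ) (δ : Fin m → ℝ) : dd m δ 0 = 1 := by simp [dd]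

lemma dd_gt (m : ℕ) (δ : Fin m → ℝ) (k : ℕ) (hk : m < k) : dd m δ k = 0 := by
  have h1 : ¬ (1 ≤ k ∧ k ≤ m) := by omega
  have h2 : k ≠ 0 := by omega
  simp only [dd, h1, h2, dite_false, if_false]

lemma dd_succ (m : ℕ) (δ : Fin m → ℝ) (i : Fin m) : dd m δ (i.val + 1) = δ i := by
  have h1 : (1 ≤ i.val + 1 ∧ i.val + 1 ≤ m) := by omega
  simp only [dd, h1]
  simp

lemma SS_mono (n m : ℕ) (S : Fin m → Finset (Fin n))
    (hnested : ∀ i j : Fin m, i < j → S i ⊂ S j) : Monotone (SS n m S) := by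
  apply monotone_nat_of_le_succ
  intro k
  rcases Nat.eq_zero_or_pos k with rfl | hk
  · simp [SS_zero]
  rcases lt_or_ge m (k+1) with h | h
  · rw [SS_gt n m S (k+1) h]; exact Finset.subset_univ _
  · have e1 := SS_succ n m S ⟨k-1, by omega⟩
    have e2 := SS_succ n m S ⟨k, by omega⟩
    simp only [Nat.sub_add_cancel hk] at e1
    simp only at e2
    rw [e1, e2]
    exact (hnested _ _ (by simp [Fin.lt_def]; omega)).subset

lemma layer_nonempty (n m : ℕ) (S : Fin m → Finset (Fin n))
    (hnested : ∀ i j : Fin m, i < j → S i ⊂ S j) (hS1 : 2 ≤ (SS n m S 1).card)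
    (k : ℕ) (hk : k < m) : (SS n m S (k+1) \ SS n m S k).Nonempty := by
  rcases Nat.eq_zero_or_pos k with rfl | hk0
  · simp only [SS_zero, Finset.sdiff_empty, zero_add]
    rw [← Finset.card_pos]; omega
  · have e1 := SS_succ n m S ⟨k-1, by omega⟩
    have e2 := SS_succ n m S ⟨k, by omega⟩
    simp only [Nat.sub_add_cancel hk0] at e1
    simp only at e2
    rw [e1, e2]
    have := hnested ⟨k-1, by omega⟩ ⟨k, by omega⟩ (by simp [Fin.lt_def]; omega)
    rw [Finset.sdiff_nonempty]
    exact this.2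

lemma abel (f D : ℕ → ℝ) (p m : ℕ) (h : p ≤ m) :
    f p * D p + ∑ i ∈ Finset.Icc (p+1) m, (f i - f (i-1)) * D i
      = ∑ k ∈ Finset.Ico p m, f k * (D k - D (k+1)) + f m * D m := by
  induction m, h using Nat.le_induction with
  | base => simp
  | succ M hM ih =>
    rw [← Finset.insert_Icc_right_eq_Icc_add_one (by omega), Finset.sum_insert (by simp),
      Finset.sum_Ico_succ_top hM]
    simp only [Nat.add_sub_cancel]
    linarith

lemma abel' (m : ℕ) (δ : Fin m → ℝ) (f : ℕ → ℝ) (p : ℕ) (h : p ≤ m) :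
    f p * dd m δ p + ∑ i ∈ Finset.Icc (p+1) m, (f i - f (i-1)) * dd m δ i
      = ∑ k ∈ Finset.Ico p (m+1), f k * lam m δ k := by
  rw [abel f _ p m h, Finset.sum_Ico_succ_top h]
  simp only [lam, dd_gt m δ (m+1) (by omega), sub_zero]

lemma mixLe_eq (n m u : ℕ) (S : Fin m → Finset (Fin n)) (p : ℕ) (hp : p ≤ m)
    (S' : Finset (Fin n)) (zd : (Fin n → ℝ) × (Fin m → ℝ)) :
    mixLeLHS n m u S p S' zd = ∑ j ∈ S', zd.1 j +
      ∑ k ∈ Finset.Ico p (m+1), ((u:ℝ) - ((S' \ SS n m S k).card : ℝ)) * lam m zd.2 k := by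
  rw [← abel' m zd.2 (fun k => (u:ℝ) - ((S' \ SS n m S k).card : ℝ)) p hp]
  simp only [mixLeLHS, add_assoc]
  congr 2
  apply Finset.sum_congr rfl
  intros; ring

lemma mixGe_eq (n m l : ℕ) (S : Fin m → Finset (Fin n)) (p : ℕ) (hp : p ≤ m)
    (S' : Finset (Fin n)) (zd : (Fin n → ℝ) × (Fin m → ℝ)) :
    mixGeLHS n m l S p S' zd = 
      ∑ k ∈ Finset.Ico p (m+1), ((l:ℝ) - (((S' ∪ SS n m S k)ᶜ).card : ℝ)) * lam m zd.2 k
      - ∑ j ∈ S', zd.1 j := by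
  rw [← abel' m zd.2 (fun k => (l:ℝ) - (((S' ∪ SS n m S k)ᶜ).card : ℝ)) p hp]
  have h : ∀ k, (((S' ∪ SS n m S k)ᶜ).card : ℝ) = n - ((S' ∪ SS n m S k).card : ℝ) := by
    intro k
    rw [Finset.card_compl, Nat.cast_sub (Finset.card_le_univ _), Fintype.card_fin]
  simp only [mixGeLHS, h]
  congr 1
  congr 1
  · ring
  apply Finset.sum_congr rfl
  intros; ring

/-- feasible set for slice `k` -/
def Feas (n m l u : ℕ) (S : Fin m → Finset (Fin n)) (k : ℕ) (T : Finset (Fin n)) : Prop :=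
  Disjoint T (SS n m S k) ∧ (k < m → (T ∩ (SS n m S (k+1) \ SS n m S k)).Nonempty) ∧
    l ≤ T.card ∧ T.card ≤ u

def pt (n m : ℕ) (T : Finset (Fin n)) (k : ℕ) : (Fin n → ℝ) × (Fin m → ℝ) :=
  (fun j => if j ∈ T then 1 else 0, fun i => if i.val + 1 ≤ k then 1 else 0)

lemma dd_pt (n m : ℕ) (T : Finset (Fin n)) (k : ℕ) (hk : k ≤ m) (i : ℕ) :
    dd m (pt n m T k).2 i = if i ≤ k then 1 else 0 := by
  rcases Nat.eq_zero_or_pos i with rfl | hi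
  · simp [dd_zero]
  rcases lt_or_ge m i with h | h
  · rw [dd_gt _ _ _ h, if_neg (by omega)]
  · have := dd_succ m (pt n m T k).2 ⟨i-1, by omega⟩
    simp only [Nat.sub_add_cancel hi] at this
    rw [this]
    simp only [pt, Nat.sub_add_cancel hi]

lemma lam_pt (n m : ℕ) (T : Finset (Fin n)) (k : ℕ) (hk : k ≤ m) (i : ℕ) :
    lam m (pt n m T k).2 i = if i = k then 1 else 0 := by
  simp only [lam, dd_pt n m T k hk]
  split_ifs <;> first | omega | norm_num

lemma sum_pt (n m : ℕ) (T A : Finset (Fin n)) (k : ℕ) :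
    ∑ j ∈ A, (pt n m T k).1 j = ((T ∩ A).card : ℝ) := by
  simp [pt, Finset.inter_comm]

lemma pt_mem (n m l u : ℕ) (S : Fin m → Finset (Fin n))
    (hnested : ∀ i j : Fin m, i < j → S i ⊂ S j) (k : ℕ)
    (T : Finset (Fin n)) (hT : Feas n m l u S k T) : pt n m T k ∈ Xset n m l u S := by
  obtain ⟨h1, h2, h3, h4⟩ := hT
  have mono := SS_mono n m S hnested
  have hs : ∑ j, (pt n m T k).1 j = (T.card : ℝ) := by
    rw [sum_pt]; simp
  refine ⟨fun j => ?_, fun i => ?_, fun i => ?_, ?_, ?_⟩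
  · simp only [pt]; split_ifs <;> simp
  · simp only [pt]; split_ifs <;> simp
  · by_cases hi : i.val + 1 ≤ k
    · simp only [pt, hi, if_true]
      symm
      apply Finset.prod_eq_one
      intro j hj
      have : j ∈ SS n m S k := mono hi (by rw [SS_succ]; exact hj)
      have : j ∉ T := fun h => (Finset.disjoint_left.mp h1) h this
      simp [this]
    · simp only [pt, hi, if_false]
      symm
      have hi2 := i.isLt
      obtain ⟨j, hj⟩ := h2 (by omega)
      simp only [Finset.mem_inter, Finset.mem_sdiff] at hj
      apply Finset.prod_eq_zero (i := j)
      · rw [← SS_succ n m S i]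
        exact mono (by omega) hj.2.1
      · simp [hj.1]
  · rw [hs]; exact_mod_cast h3
  · rw [hs]; exact_mod_cast h4

lemma mem_pt (n m l u : ℕ) (S : Fin m → Finset (Fin n))
    (hnested : ∀ i j : Fin m, i < j → S i ⊂ S j)
    (x : (Fin n → ℝ) × (Fin m → ℝ)) (hx : x ∈ Xset n m l u S) :
    ∃ k ≤ m, ∃ T, Feas n m l u S k T ∧ x = pt n m T k := by
  classical
  obtain ⟨h1, h2, h3, h4, h5⟩ := hx
  have mono := SS_mono n m S hnested
  set T : Finset (Fin n) := Finset.univ.filter (fun j => x.1 j = 1) with hT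
  have hz : ∀ j, x.1 j = if j ∈ T then 1 else 0 := by
    intro j
    rcases h1 j with h | h <;> simp [hT, h]
  have hs : ∑ j, x.1 j = (T.card : ℝ) := by
    simp [hz]
  have hk0 : Disjoint T (SS n m S 0) := by simp [SS_zero]
  let k := Nat.findGreatest (fun k => Disjoint T (SS n m S k)) m
  have hkm : k ≤ m := Nat.findGreatest_le m
  have hkd : Disjoint T (SS n m S k) :=
    Nat.findGreatest_spec (P := fun k => Disjoint T (SS n m S k)) (Nat.zero_le m) hk0
  have hkn : ∀ i, k < i → i ≤ m → ¬ Disjoint T (SS n m S i) := fun i a b =>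
    Nat.findGreatest_is_greatest (P := fun k => Disjoint T (SS n m S k)) a b
  refine ⟨k, hkm, T, ⟨hkd, ?_, ?_, ?_⟩, ?_⟩
  · intro h
    have := hkn (k+1) (by omega) (by omega)
    rw [Finset.not_disjoint_iff] at this
    obtain ⟨j, hj, hj'⟩ := this
    refine ⟨j, ?_⟩
    simp only [Finset.mem_inter, Finset.mem_sdiff]
    exact ⟨hj, hj', Finset.disjoint_left.mp hkd hj⟩
  · rw [hs] at h4; exact_mod_cast h4
  · rw [hs] at h5; exact_mod_cast h5
  · apply Prod.ext
    · funext j; rw [hz j]; rfl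
    · funext i
      rw [h3 i]
      simp only [pt]
      split_ifs with hi
      · apply Finset.prod_eq_one
        intro j hj
        have : j ∈ SS n m S k := mono hi (by rw [SS_succ]; exact hj)
        have : j ∉ T := fun h => (Finset.disjoint_left.mp hkd) h this
        simp [hz, this]
      · have := hkn (i.val+1) (by omega) (by omega)
        rw [Finset.not_disjoint_iff] at this
        obtain ⟨j, hj, hj'⟩ := this
        rw [SS_succ] at hj'
        apply Finset.prod_eq_zero hj'
        simp [hz, hj]

/-- The polyhedron. -/
def Poly (n m l u : ℕ) (S : Fin m → Finset (Fin n)) : Set ((Fin n → ℝ) × (Fin m → ℝ)) :=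
      {zd : (Fin n → ℝ) × (Fin m → ℝ) |
        NestedLin n m l u S zd ∧
        (∀ p : ℕ, 1 ≤ p → p ≤ m → ∀ S' : Finset (Fin n),
          (S' \ SS n m S p).card ≤ u - 1 → MixLe n m u S p S' zd) ∧
        (∀ p : ℕ, 1 ≤ p → p ≤ m → ∀ S' : Finset (Fin n),
          (S' ∪ SS n m S (p - 1)).card ≤ n - l → n - l < (S' ∪ SS n m S p).card →
            MixGe n m l S p S' zd)}

lemma X_sub (n m l u : ℕ) (S : Fin m → Finset (Fin n)) (hm : 0 < m)
    (hnested : ∀ i j : Fin m, i < j → S i ⊂ S j) : Xset n m l u S ⊆ Poly n m l u S := by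
  intro x hx
  obtain ⟨k, hk, T, hT, rfl⟩ := mem_pt n m l u S hnested x hx
  have h01 : ∀ j, (pt n m T k).1 j = 0 ∨ (pt n m T k).1 j = 1 := hx.1
  have mono := SS_mono n m S hnested
  obtain ⟨h1, h2, h3, h4⟩ := hT
  refine ⟨⟨hx.2.2.2.1, hx.2.2.2.2, ?_, ?_, ?_, ?_, ?_, ?_, ?_⟩, ?_, ?_⟩
  · intro i j hj
    by_cases hi : i.val + 1 ≤ k
    · have : j ∈ SS n m S k := mono hi (by rw [SS_succ]; exact hj)
      have : j ∉ T := fun h => (Finset.disjoint_left.mp h1) h this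
      simp only [pt, this, hi, if_true, if_false]; norm_num
    · simp only [pt, hi, if_false]; split_ifs <;> norm_num
  · rw [dd_pt n m T k hk, sum_pt]
    split_ifs with h
    · simp
    · have hk0 : k = 0 := by omega
      subst hk0
      have := h2 hm
      simp only [SS_zero, Finset.sdiff_empty, zero_add] at this
      rw [← Finset.card_pos] at this
      rw [zero_add]
      exact_mod_cast this
  · rw [dd_pt n m T k hk]; split_ifs <;> norm_num
  · intro j; rcases h01 j with h | h <;> rw [h]; norm_num
  · intro j _; rcases h01 j with h | h <;> rw [h]; norm_num
  · intro i _ _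
    simp only [dd_pt n m T k hk]
    split_ifs <;> first | omega | norm_num
  · intro i _ _
    have := lam_pt n m T k hk i
    rw [lam] at this
    rw [this, sum_pt]
    split_ifs with h
    · subst h
      have := h2 (by omega)
      rw [← Finset.card_pos] at this
      exact_mod_cast this
    · positivity
  · intro p hp1 hpm S' hS'
    rw [MixLe, mixLe_eq n m u S p hpm, sum_pt]
    simp only [lam_pt n m T k hk, mul_ite, mul_one, mul_zero, Finset.sum_ite_eq', Finset.mem_Ico]
    split_ifs with h
    · have : (T ∩ S').card ≤ (S' \ SS n m S k).card := by
        apply Finset.card_le_card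
        intro j hj
        simp only [Finset.mem_inter, Finset.mem_sdiff] at hj ⊢
        exact ⟨hj.2, Finset.disjoint_left.mp h1 hj.1⟩
      have : ((T ∩ S').card : ℝ) ≤ (S' \ SS n m S k).card := by exact_mod_cast this
      linarith
    · have : (T ∩ S').card ≤ u := (Finset.card_le_card Finset.inter_subset_left).trans h4
      rw [add_zero]
      exact_mod_cast this
  · intro p hp1 hpm S' _ _
    rw [MixGe, mixGe_eq n m l S p hpm, sum_pt]
    simp only [lam_pt n m T k hk, mul_ite, mul_one, mul_zero, Finset.sum_ite_eq', Finset.mem_Ico]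
    split_ifs with h
    · have e1 : (T \ S').card ≤ ((S' ∪ SS n m S k)ᶜ).card := by
        apply Finset.card_le_card
        intro j hj
        simp only [Finset.mem_sdiff, Finset.mem_compl, Finset.mem_union, not_or] at hj ⊢
        exact ⟨hj.2, Finset.disjoint_left.mp h1 hj.1⟩
      have e2 := Finset.card_inter_add_card_sdiff T S'
      have : l ≤ (T ∩ S').card + ((S' ∪ SS n m S k)ᶜ).card := by omega
      have : (l:ℝ) ≤ (T ∩ S').card + ((S' ∪ SS n m S k)ᶜ).card := by exact_mod_cast this
      linarith
    · have : (0:ℝ) ≤ (T ∩ S').card := by positivity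
      linarith

section conv
variable {E : Type*} [AddCommGroup E] [Module ℝ E]

def Aff (F : E → ℝ) : Prop := ∀ x y : E, ∀ a b : ℝ, a + b = 1 → F (a • x + b • y) = a * F x + b * F y

lemma Aff.add {F G : E → ℝ} (hF : Aff F) (hG : Aff G) : Aff (fun x => F x + G x) := by
  intro x y a b h; simp only [hF x y a b h, hG x y a b h]; ring

lemma Aff.sub {F G : E → ℝ} (hF : Aff F) (hG : Aff G) : Aff (fun x => F x - G x) := by
  intro x y a b h; simp only [hF x y a b h, hG x y a b h]; ring

lemma Aff.cmul {F : E → ℝ} (c : ℝ) (hF : Aff F) : Aff (fun x => c * F x) := by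
  intro x y a b h; simp only [hF x y a b h]; ring

lemma Aff.const (c : ℝ) : Aff (fun _ : E => c) := by
  intro x y a b h
  change c = a * c + b * c
  rw [← add_mul, h, one_mul]

lemma Aff.sum {ι : Type*} (s : Finset ι) {F : ι → E → ℝ} (hF : ∀ i, Aff (F i)) :
    Aff (fun x => ∑ i ∈ s, F i x) := by
  intro x y a b h
  simp only [fun i => hF i x y a b h, Finset.sum_add_distrib, Finset.mul_sum]

lemma Aff.le {F G : E → ℝ} (hF : Aff F) (hG : Aff G) {x y : E} {a b : ℝ} (ha : 0 ≤ a) (hb : 0 ≤ b)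
    (h : a + b = 1) (hx : F x ≤ G x) (hy : F y ≤ G y) : F (a • x + b • y) ≤ G (a • x + b • y) := by
  rw [hF x y a b h, hG x y a b h]
  gcongr
end conv

lemma Aff.z {n m : ℕ} (j : Fin n) : Aff (fun x : (Fin n → ℝ) × (Fin m → ℝ) => x.1 j) := by
  intro x y a b h; simp

lemma Aff.d {n m : ℕ} (j : Fin m) : Aff (fun x : (Fin n → ℝ) × (Fin m → ℝ) => x.2 j) := by
  intro x y a b h; simp

lemma Aff.dd {n m : ℕ} (k : ℕ) : Aff (fun x : (Fin n → ℝ) × (Fin m → ℝ) => dd m x.2 k) := by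
  by_cases h : 1 ≤ k ∧ k ≤ m
  · simp only [_root_.dd, h, dite_true]
    exact Aff.d _
  · by_cases h0 : k = 0
    · subst h0; simp only [dd_zero]; exact Aff.const _
    · simp only [_root_.dd, h, h0, dite_false, if_false]; exact Aff.const _

lemma poly_convex (n m l u : ℕ) (S : Fin m → Finset (Fin n)) : Convex ℝ (Poly n m l u S) := by
  intro x hx y hy a b ha hb hab
  obtain ⟨⟨a1, a2, a3, a4, a5, a6, a7, a8, a9⟩, a10, a11⟩ := hx
  obtain ⟨⟨b1, b2, b3, b4, b5, b6, b7, b8, b9⟩, b10, b11⟩ := hy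
  refine ⟨⟨?_, ?_, ?_, ?_, ?_, ?_, ?_, ?_, ?_⟩, ?_, ?_⟩
  · exact Aff.le (Aff.const _) (Aff.sum _ Aff.z) ha hb hab a1 b1
  · exact Aff.le (Aff.sum _ Aff.z) (Aff.const _) ha hb hab a2 b2
  · intro i j hj
    exact Aff.le ((Aff.z j).add (Aff.d i)) (Aff.const _) ha hb hab (a3 i j hj) (b3 i j hj)
  · exact Aff.le (Aff.const _) ((Aff.dd 1).add (Aff.sum _ Aff.z)) ha hb hab a4 b4
  · exact Aff.le (Aff.const _) (Aff.dd m) ha hb hab a5 b5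
  · intro j
    exact Aff.le (Aff.const _) (Aff.z j) ha hb hab (a6 j) (b6 j)
  · intro j hj
    exact Aff.le (Aff.z j) (Aff.const _) ha hb hab (a7 j hj) (b7 j hj)
  · intro i h1 h2
    exact Aff.le (Aff.dd _) (Aff.dd _) ha hb hab (a8 i h1 h2) (b8 i h1 h2)
  · intro i h1 h2
    exact Aff.le ((Aff.dd _).sub (Aff.dd _)) (Aff.sum _ Aff.z) ha hb hab (a9 i h1 h2) (b9 i h1 h2)
  · intro p h1 h2 S' h3
    exact Aff.le (((Aff.sum _ Aff.z).add ((Aff.dd p).cmul _)).add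
      (Aff.sum _ fun i => (Aff.dd i).cmul _)) (Aff.const _) ha hb hab
      (a10 p h1 h2 S' h3) (b10 p h1 h2 S' h3)
  · intro p h1 h2 S' h3 h4
    exact Aff.le ((((Aff.dd p).cmul _).add
      (Aff.sum _ fun i => (Aff.dd i).cmul _)).sub (Aff.sum _ Aff.z)) (Aff.const _) ha hb hab
      (a11 p h1 h2 S' h3 h4) (b11 p h1 h2 S' h3 h4)


lemma layercake_pos {ι : Type*} [Fintype ι] [DecidableEq ι] (w : ι → ℝ) (N : ℕ) :
    ∀ α : ι → ℝ, (∀ j, 0 ≤ α j) → (Finset.univ.filter (fun j => 0 < α j)).card ≤ N →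
    (∀ t : ℝ, 0 < t → 0 ≤ ∑ j ∈ Finset.univ.filter (fun j => t ≤ α j), w j) →
    0 ≤ ∑ j, α j * w j := by
  induction N with
  | zero =>
    intro α h0 hc _
    have : ∀ j, α j = 0 := by
      intro j
      by_contra hj
      have hp : 0 < α j := lt_of_le_of_ne (h0 j) (Ne.symm hj)
      have : (Finset.univ.filter (fun j => 0 < α j)) = ∅ := by
        rw [← Finset.card_eq_zero]; omega
      have h : j ∈ (Finset.univ.filter (fun j => 0 < α j)) := by simp [hp]
      rw [this] at h; simp at h
    simp [this]
  | succ N ih =>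
    intro α h0 hc hl
    by_cases hne : (Finset.univ.filter (fun j => 0 < α j)).Nonempty
    · obtain ⟨j0, hj0, hmin⟩ := Finset.exists_min_image _ α hne
      simp only [Finset.mem_filter, Finset.mem_univ, true_and] at hj0 hmin
      have key := ih (fun j => if 0 < α j then α j - α j0 else 0) ?_ ?_ ?_
      · have e : ∑ j, α j * w j = ∑ j, (if 0 < α j then α j - α j0 else 0) * w j
            + α j0 * ∑ j ∈ Finset.univ.filter (fun j => α j0 ≤ α j), w j := by
          rw [Finset.sum_filter, Finset.mul_sum, ← Finset.sum_add_distrib]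
          apply Finset.sum_congr rfl
          intro j _
          by_cases hj : 0 < α j
          · simp only [hj, hmin j hj, if_true]; ring
          · have : α j = 0 := le_antisymm (not_lt.mp hj) (h0 j)
            have h2 : ¬ α j0 ≤ α j := by rw [this]; exact not_le.mpr hj0
            rw [if_neg hj, if_neg h2, this]; ring
        rw [e]
        have := hl _ hj0
        positivity
      · intro j
        split_ifs with h
        · linarith [hmin j h]
        · exact le_rfl
      · have : (Finset.univ.filter (fun j => 0 < (if 0 < α j then α j - α j0 else 0))).card <
          (Finset.univ.filter (fun j => 0 < α j)).card := by
          apply Finset.card_lt_card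
          rw [Finset.ssubset_iff_of_subset]
          · refine ⟨j0, by simp [hj0], by simp⟩
          · intro j
            simp only [Finset.mem_filter, Finset.mem_univ, true_and]
            split_ifs with h
            · intro _; exact h
            · simp
        omega
      · intro t ht
        have : (Finset.univ.filter (fun j => t ≤ (if 0 < α j then α j - α j0 else 0))) =
            Finset.univ.filter (fun j => t + α j0 ≤ α j) := by
          ext j
          simp only [Finset.mem_filter, Finset.mem_univ, true_and]
          split_ifs with h
          · constructor <;> intro <;> linarith
          · constructor <;> intro <;> linarith
        rw [this]
        exact hl _ (by linarith)
    · apply ih α h0 _ hl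
      rw [Finset.not_nonempty_iff_eq_empty.mp hne]; simp

lemma layercake {ι : Type*} [Fintype ι] [DecidableEq ι] (w α : ι → ℝ)
    (h1 : ∀ t : ℝ, 0 < t → 0 ≤ ∑ j ∈ Finset.univ.filter (fun j => t ≤ α j), w j)
    (h2 : ∀ t : ℝ, t < 0 → ∑ j ∈ Finset.univ.filter (fun j => α j ≤ t), w j ≤ 0) :
    0 ≤ ∑ j, α j * w j := by
  have a := layercake_pos w _ (fun j => max (α j) 0) (fun j => le_max_right _ _) le_rfl (by
    intro t ht
    have e : Finset.univ.filter (fun j => t ≤ max (α j) 0) =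
        Finset.univ.filter (fun j => t ≤ α j) := by
      ext j
      simp only [Finset.mem_filter, Finset.mem_univ, true_and, le_max_iff, not_le.mpr ht, or_false]
    rw [e]; exact h1 t ht)
  have b := layercake_pos (fun j => - w j) _ (fun j => max (- α j) 0)
    (fun j => le_max_right _ _) le_rfl (by
    intro t ht
    have := h2 (-t) (by linarith)
    have e : Finset.univ.filter (fun j => t ≤ max (-α j) 0) =
        Finset.univ.filter (fun j => α j ≤ -t) := by
      ext j
      simp only [Finset.mem_filter, Finset.mem_univ, true_and, le_max_iff, not_le.mpr ht, or_false]
      constructor <;> intro <;> linarith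
    rw [e, Finset.sum_neg_distrib]; linarith)
  have := add_nonneg a b
  rw [← Finset.sum_add_distrib] at this
  refine this.trans_eq (Finset.sum_congr rfl fun j _ => ?_)
  rcases le_total 0 (α j) with h | h
  · rw [max_eq_left h, max_eq_right (by linarith)]; ring
  · rw [max_eq_right h, max_eq_left (by linarith)]; ring

/-- swapping changes the sum -/
lemma greedy {ι : Type*} [Fintype ι] [DecidableEq ι] (R L : Finset ι) (need : Prop) (l u : ℕ)
    (hlu : l < u) (hneed : need → L.Nonempty) (hLR : Disjoint L R) (hl : l ≤ (Rᶜ).card)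
    (α : ι → ℝ) :
    ∃ T : Finset ι, (Disjoint T R ∧ (need → (T ∩ L).Nonempty) ∧ l ≤ T.card ∧ T.card ≤ u) ∧
    (∀ t : ℝ, 0 < t → ∀ A, A = Finset.univ.filter (fun j => t ≤ α j) →
      ((A \ R).card ≤ (T ∩ A).card ∨ u ≤ (T ∩ A).card ∨
        (need ∧ Disjoint A L ∧ u ≤ (T ∩ A).card + 1))) ∧
    (∀ t : ℝ, t < 0 → ∀ B, B = Finset.univ.filter (fun j => α j ≤ t) →
      ((T ∩ B).card = 0 ∨ (T ∩ B).card + ((B ∪ R)ᶜ).card ≤ l ∨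
        (need ∧ L ⊆ B ∧ (T ∩ B).card ≤ 1))) := by
  classical
  let F : Finset (Finset ι) := Finset.univ.filter (fun T =>
    Disjoint T R ∧ (need → (T ∩ L).Nonempty) ∧ l ≤ T.card ∧ T.card ≤ u)
  have hF : F.Nonempty := by
    by_cases hn : need
    · obtain ⟨a, ha⟩ := hneed hn
      have haR : a ∈ Rᶜ := by
        rw [Finset.mem_compl]; exact Finset.disjoint_left.mp hLR ha
      have hpos : 0 < (Rᶜ).card := Finset.card_pos.mpr ⟨a, haR⟩
      obtain ⟨T, hT1, hT2, hT3⟩ := Finset.exists_subsuperset_card_eq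
        (s := {a}) (t := Rᶜ) (n := max l 1) (by simpa using haR) (by simp) (max_le hl hpos)
      refine ⟨T, ?_⟩
      simp only [F, Finset.mem_filter, Finset.mem_univ, true_and]
      refine ⟨?_, fun _ => ⟨a, by simp [ha]; exact hT1 (by simp)⟩, by omega, by omega⟩
      rw [Finset.disjoint_left]
      intro j hj; simpa using hT2 hj
    · obtain ⟨T, hT2, hT3⟩ := Finset.exists_subset_card_eq hl
      refine ⟨T, ?_⟩
      simp only [F, Finset.mem_filter, Finset.mem_univ, true_and]
      refine ⟨?_, fun h => absurd h hn, by omega, by omega⟩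
      rw [Finset.disjoint_left]
      intro j hj; simpa using hT2 hj
  obtain ⟨T, hT, hmax⟩ := Finset.exists_max_image F (fun T => ∑ j ∈ T, α j) hF
  simp only [F, Finset.mem_filter, Finset.mem_univ, true_and] at hT hmax
  obtain ⟨hT1, hT2, hT3, hT4⟩ := hT
  -- adding
  have hadd : ∀ a, a ∉ T → a ∉ R → T.card < u → α a ≤ 0 := by
    intro a h1 h2 h3
    have := hmax (insert a T) ⟨by simp [h1, h2, hT1], fun h => ?_, ?_, ?_⟩
    · rw [Finset.sum_insert h1] at this; linarith
    · exact (hT2 h).mono (Finset.inter_subset_inter_right (Finset.subset_insert _ _))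
    · rw [Finset.card_insert_of_notMem h1]; omega
    · rw [Finset.card_insert_of_notMem h1]; omega
  have hrem : ∀ b ∈ T, (need → ((T.erase b) ∩ L).Nonempty) → l < T.card → 0 ≤ α b := by
    intro b h1 h2 h3
    have := hmax (T.erase b) ⟨hT1.mono_left (Finset.erase_subset _ _), h2, ?_, ?_⟩
    · rw [← Finset.add_sum_erase T α h1] at this; linarith
    · rw [Finset.card_erase_of_mem h1]; omega
    · rw [Finset.card_erase_of_mem h1]; omega
  have hswap : ∀ b ∈ T, ∀ a, a ∉ T → a ∉ R → (need → (insert a (T.erase b) ∩ L).Nonempty) →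
      α a ≤ α b := by
    intro b h1 a h2 h3 h4
    have hna : a ∉ T.erase b := fun h => h2 (Finset.mem_of_mem_erase h)
    have hcard : (insert a (T.erase b)).card = T.card := by
      rw [Finset.card_insert_of_notMem hna, Finset.card_erase_of_mem h1]
      have := Finset.card_pos.mpr ⟨b, h1⟩
      omega
    have := hmax (insert a (T.erase b)) ⟨?_, h4, by omega, by omega⟩
    · rw [← Finset.add_sum_erase T α h1, Finset.sum_insert hna] at this; linarith
    · rw [Finset.disjoint_insert_left]
      exact ⟨h3, hT1.mono_left (Finset.erase_subset _ _)⟩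
  have hgood : ∀ b ∈ T, (need → ((T.erase b) ∩ L).Nonempty) ∨
      (need ∧ b ∈ L ∧ ∀ c ∈ T, c ∈ L → c = b) := by
    intro b hb
    by_cases h : need → ((T.erase b) ∩ L).Nonempty
    · exact Or.inl h
    · right
      push Not at h
      obtain ⟨hn, he⟩ := h
      have huniq : ∀ c ∈ T, c ∈ L → c = b := by
        intro c hc hcL
        by_contra hcb
        have : c ∈ (T.erase b) ∩ L := by simp [hcb, hc, hcL]
        rw [he] at this; simp at this
      obtain ⟨c, hc⟩ := hT2 hn
      rw [Finset.mem_inter] at hc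
      have := huniq c hc.1 hc.2
      subst this
      exact ⟨hn, hc.2, huniq⟩
  have hgood2 : ∀ C ⊆ T, 2 ≤ C.card → ∃ b ∈ C, (need → ((T.erase b) ∩ L).Nonempty) := by
    intro C hC h2
    obtain ⟨b, hb, c, hc, hbc⟩ := Finset.one_lt_card.mp h2
    rcases hgood b (hC hb) with h | ⟨_, h1, h3⟩
    · exact ⟨b, hb, h⟩
    · rcases hgood c (hC hc) with h | ⟨_, h4, h5⟩
      · exact ⟨c, hc, h⟩
      · exact absurd (h3 c (hC hc) h4).symm hbc
  have hgmono : ∀ b a, (need → ((T.erase b) ∩ L).Nonempty) →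
      (need → (insert a (T.erase b) ∩ L).Nonempty) := fun b a h hn =>
    (h hn).mono (Finset.inter_subset_inter_right (Finset.subset_insert _ _))
  refine ⟨T, ⟨hT1, hT2, hT3, hT4⟩, ?_, ?_⟩
  · intro t ht A hA
    have hAm : ∀ j, j ∈ A ↔ t ≤ α j := by intro j; simp [hA]
    by_contra hcon
    push Not at hcon
    obtain ⟨c1, c2, c3⟩ := hcon
    -- an element of A \ R not in T
    obtain ⟨a, ha, haT⟩ := Finset.exists_mem_notMem_of_card_lt_card c1
    rw [Finset.mem_sdiff] at ha
    have haT' : a ∉ T := fun h => haT (Finset.mem_inter.mpr ⟨h, ha.1⟩)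
    have hau := (hAm a).1 ha.1
    have hTu : T.card = u := by
      by_contra h
      have := hadd a haT' ha.2 (by omega)
      linarith
    have hsp := Finset.card_inter_add_card_sdiff T A
    by_cases h2 : 2 ≤ (T \ A).card
    · obtain ⟨b, hb, hg⟩ := hgood2 _ Finset.sdiff_subset h2
      rw [Finset.mem_sdiff, hAm] at hb
      have := hswap b hb.1 a haT' ha.2 (hgmono b a hg)
      exact hb.2 (by linarith)
    · have h1 : (T \ A).card = 1 := by omega
      obtain ⟨b, hb⟩ := Finset.card_pos.mp (by omega : 0 < (T \ A).card)
      rw [Finset.mem_sdiff, hAm] at hb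
      rcases hgood b hb.1 with hg | ⟨hn, hbL, hun⟩
      · have := hswap b hb.1 a haT' ha.2 (hgmono b a hg)
        exact hb.2 (by linarith)
      · have hnd : ¬ Disjoint A L := by
          intro hd
          have := c3 hn hd
          omega
        rw [Finset.not_disjoint_iff] at hnd
        obtain ⟨a', ha', haL⟩ := hnd
        have hx : a' ∉ T := by
          intro h
          have := hun a' h haL
          subst this
          exact hb.2 ((hAm _).1 ha')
        have := hswap b hb.1 a' hx (Finset.disjoint_left.mp hLR haL)
          (fun _ => ⟨a', by simp [haL]⟩)
        exact hb.2 (by linarith [(hAm _).1 ha'])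
  · intro t ht B hB
    have hBm : ∀ j, j ∈ B ↔ α j ≤ t := by intro j; simp [hB]
    by_contra hcon
    push Not at hcon
    obtain ⟨c1, c2, c3⟩ := hcon
    have hsp := Finset.card_inter_add_card_sdiff T B
    have stepA : ∀ b ∈ T, b ∈ B → (need → ((T.erase b) ∩ L).Nonempty) → False := by
      intro b hb hbB hg
      have hbt := (hBm b).1 hbB
      by_cases hc : l < T.card
      · have := hrem b hb hg hc; linarith
      · have : (T \ B).card < ((B ∪ R)ᶜ).card := by omega
        obtain ⟨a, ha, haT⟩ := Finset.exists_mem_notMem_of_card_lt_card this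
        simp only [Finset.mem_compl, Finset.mem_union, not_or] at ha
        have haT' : a ∉ T := fun h => haT (Finset.mem_sdiff.mpr ⟨h, ha.1⟩)
        have := hswap b hb a haT' ha.2 (hgmono b a hg)
        exact ha.1 ((hBm a).2 (by linarith))
    by_cases h2 : 2 ≤ (T ∩ B).card
    · obtain ⟨b, hb, hg⟩ := hgood2 _ Finset.inter_subset_left h2
      rw [Finset.mem_inter] at hb
      exact stepA b hb.1 hb.2 hg
    · obtain ⟨b, hb⟩ := Finset.card_pos.mp (by omega : 0 < (T ∩ B).card)
      rw [Finset.mem_inter] at hb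
      rcases hgood b hb.1 with hg | ⟨hn, hbL, hun⟩
      · exact stepA b hb.1 hb.2 hg
      · have hnd : ¬ L ⊆ B := by
          intro hd
          have := c3 hn hd
          omega
        rw [Finset.not_subset] at hnd
        obtain ⟨a, haL, haB⟩ := hnd
        have hx : a ∉ T := by
          intro h
          have := hun a h haL
          subst this
          exact haB hb.2
        have := hswap b hb.1 a hx (Finset.disjoint_left.mp hLR haL)
          (fun _ => ⟨a, by simp [haL]⟩)
        exact haB ((hBm a).2 (by linarith [(hBm b).1 hb.2]))

lemma sum_lam (m : ℕ) (δ : Fin m → ℝ) (p : ℕ) :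
    ∑ k ∈ Finset.range p, lam m δ k = 1 - dd m δ p := by
  simp only [lam]
  rw [Finset.sum_range_sub', dd_zero]

section core
variable {n m l u : ℕ} {S : Fin m → Finset (Fin n)} {z : Fin n → ℝ} {δ : Fin m → ℝ}

lemma lam_nonneg (hm : 0 < m) (hS1 : 2 ≤ (SS n m S 1).card)
    (h : NestedLin n m l u S (z, δ)) (k : ℕ) (hk : k ≤ m) : 0 ≤ lam m δ k := by
  obtain ⟨a1, a2, a3, a4, a5, a6, a7, a8, a9⟩ := h
  simp only at *
  unfold lam
  rcases Nat.eq_zero_or_pos k with rfl | hk0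
  · obtain ⟨j, hj⟩ := Finset.card_pos.mp (by omega : 0 < (SS n m S 1).card)
    have e := SS_succ n m S ⟨0, hm⟩
    have e' := dd_succ m δ ⟨0, hm⟩
    simp only [zero_add] at e e'
    have := a3 ⟨0, hm⟩ j (by rw [← e]; exact hj)
    have := a6 j
    rw [dd_zero, zero_add, e']; linarith
  · rcases Nat.lt_or_ge k m with h | h
    · have := a8 k hk0 (by omega); linarith
    · have : k = m := by omega
      subst this
      rw [dd_gt k δ (k+1) (by omega)]; linarith

lemma layer_sum (hnested : ∀ i j : Fin m, i < j → S i ⊂ S j)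
    (h : NestedLin n m l u S (z, δ)) (Q : Finset ℕ) (hQ : ∀ k ∈ Q, k < m) :
    ∑ k ∈ Q, lam m δ k ≤ ∑ j ∈ Q.biUnion (fun k => SS n m S (k+1) \ SS n m S k), z j := by
  obtain ⟨a1, a2, a3, a4, a5, a6, a7, a8, a9⟩ := h
  have mono := SS_mono n m S hnested
  rw [Finset.sum_biUnion]
  · apply Finset.sum_le_sum
    intro k hk
    have := hQ k hk
    unfold lam
    rcases Nat.eq_zero_or_pos k with rfl | hk0
    · simp only [SS_zero, Finset.sdiff_empty, zero_add, dd_zero]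
      simp only at a4
      linarith
    · exact a9 k hk0 (by omega)
  · intro k _ k' _ hkk
    have aux : ∀ k k' : ℕ, k < k' →
        Disjoint (SS n m S (k+1) \ SS n m S k) (SS n m S (k'+1) \ SS n m S k') := by
      intro k k' hlt
      rw [Finset.disjoint_left]
      intro j hj hj'
      rw [Finset.mem_sdiff] at hj hj'
      exact hj'.2 (mono (by omega) hj.1)
    rcases lt_or_gt_of_ne hkk with h | h
    · exact aux _ _ h
    · exact (aux _ _ h).symm

lemma cover (hm : 0 < m) (hS1 : 2 ≤ (SS n m S 1).card)
    (h : NestedLin n m l u S (z, δ)) (A : Finset (Fin n)) :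
    ∑ j ∈ A, z j ≤ ∑ k ∈ Finset.range (m+1), ((A \ SS n m S k).card : ℝ) * lam m δ k := by
  have hl := lam_nonneg hm hS1 h
  obtain ⟨a1, a2, a3, a4, a5, a6, a7, a8, a9⟩ := h
  simp only at *
  have e : ∀ k, ((A \ SS n m S k).card : ℝ) * lam m δ k =
      ∑ j ∈ A, if j ∉ SS n m S k then lam m δ k else 0 := by
    intro k
    rw [← Finset.sum_filter, Finset.sum_const, nsmul_eq_mul]
    congr 3
    ext j; simp
  simp only [e]
  rw [Finset.sum_comm]
  apply Finset.sum_le_sum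
  intro j _
  have hex : ∃ i, j ∈ SS n m S i := ⟨m+1, by rw [SS_gt n m S _ (by omega)]; simp⟩
  classical
  have hi := Nat.find_spec hex
  have hmin := fun i => Nat.find_min (m := i) hex
  have hle : Nat.find hex ≤ m+1 := Nat.find_min' hex (by rw [SS_gt n m S _ (by omega)]; simp)
  generalize Nat.find hex = i at hi hmin hle
  have h1 : z j ≤ 1 - dd m δ i := by
    rcases Nat.eq_zero_or_pos i with rfl | hi0
    · simp [SS_zero] at hi
    rcases Nat.lt_or_ge m i with hmi | hmi
    · have : i = m+1 := by omega
      rw [dd_gt _ _ _ hmi, sub_zero]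
      exact a7 j (hmin m (by omega))
    · have e := SS_succ n m S ⟨i-1, by omega⟩
      have e' := dd_succ m δ ⟨i-1, by omega⟩
      simp only [Nat.sub_add_cancel hi0] at e e'
      rw [e] at hi
      have := a3 _ j hi
      rw [e']; linarith
  refine h1.trans ?_
  rw [← sum_lam m δ i]
  calc ∑ k ∈ Finset.range i, lam m δ k
      = ∑ k ∈ Finset.range i, (if j ∉ SS n m S k then lam m δ k else 0) := by
        apply Finset.sum_congr rfl
        intro k hk
        rw [if_pos (hmin k (Finset.mem_range.mp hk))]
    _ ≤ _ := by
        apply Finset.sum_le_sum_of_subset_of_nonneg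
        · intro k; simp only [Finset.mem_range]; omega
        · intro k hk _
          rw [Finset.mem_range] at hk
          split_ifs
          · exact le_rfl
          · exact hl k (by omega)

lemma split_sum (f : ℕ → ℝ) (p M : ℕ) (h : p ≤ M) :
    ∑ k ∈ Finset.range M, f k = ∑ k ∈ Finset.range p, f k + ∑ k ∈ Finset.Ico p M, f k :=
  (Finset.sum_range_add_sum_Ico f h).symm

lemma upper (hm : 0 < m) (hu : 2 ≤ u) (hnested : ∀ i j : Fin m, i < j → S i ⊂ S j)
    (hS1 : 2 ≤ (SS n m S 1).card)
    (hP : (z, δ) ∈ Poly n m l u S) (A : Finset (Fin n)) (c : ℕ → ℕ)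
    (hc : ∀ k ≤ m, (A \ SS n m S k).card ≤ c k ∨ u ≤ c k ∨
      (k < m ∧ Disjoint A (SS n m S (k+1) \ SS n m S k) ∧ u ≤ c k + 1)) :
    ∑ j ∈ A, z j ≤ ∑ k ∈ Finset.range (m+1), lam m δ k * c k := by
  classical
  obtain ⟨hN, hLe, -⟩ := hP
  have hl := lam_nonneg hm hS1 hN
  have mono := SS_mono n m S hnested
  have hcard0 : (A \ SS n m S (m+1)).card ≤ u - 1 := by
    have : A \ SS n m S (m+1) = ∅ := by
      rw [SS_gt n m S (m+1) (by omega), Finset.sdiff_eq_empty_iff_subset]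
      exact Finset.subset_univ _
    rw [this, Finset.card_empty]; omega
  have hex : ∃ p, (A \ SS n m S p).card ≤ u - 1 := ⟨m+1, hcard0⟩
  have hp := Nat.find_spec hex
  have hmin := fun i => Nat.find_min (m := i) hex
  have hle : Nat.find hex ≤ m+1 := Nat.find_min' hex hcard0
  generalize Nat.find hex = p at hp hmin hle
  let Q := (Finset.range p).filter
    (fun k => k < m ∧ Disjoint A (SS n m S (k+1) \ SS n m S k))
  let V := Q.biUnion (fun k => SS n m S (k+1) \ SS n m S k)
  have hV := layer_sum hnested hN Q (fun k hk => (Finset.mem_filter.mp hk).2.1)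
  have hAV : Disjoint A V := by
    rw [Finset.disjoint_biUnion_right]
    intro k hk; exact (Finset.mem_filter.mp hk).2.2
  have hVp : ∀ k, p ≤ k → (A ∪ V) \ SS n m S k = A \ SS n m S k := by
    intro k hk
    rw [Finset.union_sdiff_distrib]
    have : V \ SS n m S k = ∅ := by
      rw [Finset.sdiff_eq_empty_iff_subset]
      intro j hj
      obtain ⟨i, hi, hj⟩ := Finset.mem_biUnion.mp hj
      have := Finset.mem_range.mp (Finset.mem_filter.mp hi).1
      exact mono (by omega) (Finset.mem_sdiff.mp hj).1
    rw [this, Finset.union_empty]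
  have H : ∑ j ∈ A ∪ V, z j ≤ ∑ k ∈ Finset.range p, (u:ℝ) * lam m δ k +
      ∑ k ∈ Finset.Ico p (m+1), ((A \ SS n m S k).card : ℝ) * lam m δ k := by
    have htot : (u:ℝ) = ∑ k ∈ Finset.range (m+1), (u:ℝ) * lam m δ k := by
      rw [← Finset.mul_sum, sum_lam, dd_gt _ _ _ (by omega)]; ring
    rcases Nat.eq_zero_or_pos p with rfl | hp0
    · have := cover hm hS1 hN (A ∪ V)
      rw [Finset.sum_congr rfl (g := fun k => ((A \ SS n m S k).card : ℝ) * lam m δ k)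
        (fun k _ => by rw [hVp k (Nat.zero_le k)])] at this
      rw [Finset.range_zero, Finset.sum_empty, zero_add, ← Finset.range_eq_Ico]
      exact this
    rcases Nat.lt_or_ge m p with hmp | hmp
    · have : p = m+1 := by omega
      subst this
      rw [← htot]
      simp only [Finset.Ico_self, Finset.sum_empty, add_zero]
      refine le_trans ?_ hN.2.1
      exact Finset.sum_le_sum_of_subset_of_nonneg (Finset.subset_univ _)
        (fun j _ _ => hN.2.2.2.2.2.1 j)
    · have := hLe p hp0 hmp (A ∪ V) (by rw [hVp p le_rfl]; exact hp)
      rw [MixLe, mixLe_eq _ _ _ _ _ hmp] at this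
      simp only at this
      rw [Finset.sum_congr (s₁ := Finset.Ico p (m+1)) rfl
        (g := fun k => (u:ℝ) * lam m δ k - ((A \ SS n m S k).card : ℝ) * lam m δ k) (fun k hk => by
        rw [hVp k (Finset.mem_Ico.mp hk).1, sub_mul]), Finset.sum_sub_distrib] at this
      rw [split_sum _ p (m+1) (by omega)] at htot
      linarith
  rw [Finset.sum_union hAV] at H
  have h1 : ∑ k ∈ Finset.range p, (u:ℝ) * lam m δ k - ∑ k ∈ Q, lam m δ k ≤
      ∑ k ∈ Finset.range p, lam m δ k * c k := by
    rw [Finset.sum_filter, ← Finset.sum_sub_distrib]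
    apply Finset.sum_le_sum
    intro k hk
    rw [Finset.mem_range] at hk
    have hlk := hl k (by omega)
    have hmk := hmin k hk
    split_ifs with hb
    · have : u ≤ c k + 1 := by
        rcases hc k (by omega) with h | h | h <;> omega
      have : (u:ℝ) ≤ c k + 1 := by exact_mod_cast this
      nlinarith
    · have : u ≤ c k := by
        rcases hc k (by omega) with h | h | h
        · omega
        · omega
        · exact absurd ⟨h.1, h.2.1⟩ hb
      have : (u:ℝ) ≤ c k := by exact_mod_cast this
      nlinarith
  have h2 : ∑ k ∈ Finset.Ico p (m+1), ((A \ SS n m S k).card : ℝ) * lam m δ k ≤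
      ∑ k ∈ Finset.Ico p (m+1), lam m δ k * c k := by
    apply Finset.sum_le_sum
    intro k hk
    rw [Finset.mem_Ico] at hk
    have hlk := hl k (by omega)
    have hck : (A \ SS n m S k).card ≤ u - 1 :=
      (Finset.card_le_card (Finset.sdiff_subset_sdiff subset_rfl (mono hk.1))).trans hp
    have : (A \ SS n m S k).card ≤ c k := by
      rcases hc k (by omega) with h | h | h <;> omega
    have : ((A \ SS n m S k).card : ℝ) ≤ c k := by exact_mod_cast this
    nlinarith
  rw [split_sum _ p (m+1) hle]
  linarith

lemma lower (hm : 0 < m) (hnested : ∀ i j : Fin m, i < j → S i ⊂ S j)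
    (hS1 : 2 ≤ (SS n m S 1).card) (hln : l ≤ n)
    (hP : (z, δ) ∈ Poly n m l u S) (A : Finset (Fin n)) (c : ℕ → ℕ)
    (hc : ∀ k ≤ m, c k = 0 ∨ c k + ((A ∪ SS n m S k)ᶜ).card ≤ l ∨
      (k < m ∧ SS n m S (k+1) \ SS n m S k ⊆ A ∧ c k ≤ 1)) :
    ∑ k ∈ Finset.range (m+1), lam m δ k * c k ≤ ∑ j ∈ A, z j := by
  classical
  obtain ⟨hN, -, hGe⟩ := hP
  have hl := lam_nonneg hm hS1 hN
  have hz : ∀ j, 0 ≤ z j := hN.2.2.2.2.2.1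
  have mono := SS_mono n m S hnested
  have hex : ∃ p, ((A ∪ SS n m S p)ᶜ).card < l ∨ p = m+1 := ⟨m+1, Or.inr rfl⟩
  have hp := Nat.find_spec hex
  have hmin := fun i => Nat.find_min (m := i) hex
  have hle : Nat.find hex ≤ m+1 := Nat.find_min' hex (Or.inr rfl)
  generalize Nat.find hex = p at hp hmin hle
  let Q := (Finset.range p).filter
    (fun k => k < m ∧ SS n m S (k+1) \ SS n m S k ⊆ A)
  let V := Q.biUnion (fun k => SS n m S (k+1) \ SS n m S k)
  have hV := layer_sum hnested hN Q (fun k hk => (Finset.mem_filter.mp hk).2.1)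
  have hAV : V ⊆ A := by
    intro j hj
    obtain ⟨i, hi, hj⟩ := Finset.mem_biUnion.mp hj
    exact (Finset.mem_filter.mp hi).2.2 hj
  have hVp : ∀ k, p ≤ k → (A \ V) ∪ SS n m S k = A ∪ SS n m S k := by
    intro k hk
    have hVS : V ⊆ SS n m S k := by
      intro j hj
      obtain ⟨i, hi, hj⟩ := Finset.mem_biUnion.mp hj
      have := Finset.mem_range.mp (Finset.mem_filter.mp hi).1
      exact mono (by omega) (Finset.mem_sdiff.mp hj).1
    ext j
    have := @hVS j
    simp only [Finset.mem_union, Finset.mem_sdiff]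
    tauto
  have hcc : ∀ B : Finset (Fin n), (Bᶜ).card + B.card = n := by
    intro B
    rw [Finset.card_compl_add_card, Fintype.card_fin]
  have H : ∑ k ∈ Finset.Ico p (m+1), ((l:ℝ) - (((A ∪ SS n m S k)ᶜ).card : ℝ)) * lam m δ k
      ≤ ∑ j ∈ A \ V, z j := by
    rcases Nat.eq_zero_or_pos p with rfl | hp0
    · have h0 : V = ∅ := rfl
      rw [h0, Finset.sdiff_empty]
      have h1 := cover hm hS1 hN Aᶜ
      have h2 : ∑ j ∈ A, z j + ∑ j ∈ Aᶜ, z j = ∑ j, z j := Finset.sum_add_sum_compl A z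
      have h3 : (l:ℝ) ≤ ∑ j, z j := hN.1
      have htot : (l:ℝ) = ∑ k ∈ Finset.range (m+1), (l:ℝ) * lam m δ k := by
        rw [← Finset.mul_sum, sum_lam, dd_gt _ _ _ (by omega)]; ring
      rw [← Finset.range_eq_Ico]
      simp only [sub_mul]
      rw [Finset.sum_sub_distrib, ← htot]
      have e : ∀ k, Aᶜ \ SS n m S k = (A ∪ SS n m S k)ᶜ := by
        intro k; ext j; simp
      simp only [e] at h1
      linarith
    rcases Nat.lt_or_ge m p with hmp | hmp
    · have : p = m+1 := by omega
      subst this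
      simp only [Finset.Ico_self, Finset.sum_empty]
      exact Finset.sum_nonneg (fun j _ => hz j)
    · have hA1 := hmin (p-1) (by omega)
      have c1 := hcc (A ∪ SS n m S (p-1))
      have c2 := hcc (A ∪ SS n m S p)
      have c3 : ((A \ V) ∪ SS n m S (p-1)).card ≤ (A ∪ SS n m S (p-1)).card :=
        Finset.card_le_card (Finset.union_subset_union_left Finset.sdiff_subset)
      have := hGe p hp0 hmp (A \ V) (by omega) (by rw [hVp p le_rfl]; omega)
      rw [MixGe, mixGe_eq _ _ _ _ _ hmp] at this
      simp only at this
      rw [Finset.sum_congr rfl (fun k hk => by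
        rw [hVp k (Finset.mem_Ico.mp hk).1])] at this
      linarith
  have hsp := Finset.sum_sdiff (f := z) hAV
  have h1 : ∑ k ∈ Finset.range p, lam m δ k * c k ≤ ∑ k ∈ Q, lam m δ k := by
    rw [Finset.sum_filter]
    apply Finset.sum_le_sum
    intro k hk
    rw [Finset.mem_range] at hk
    have hlk := hl k (by omega)
    have hmk := hmin k hk
    split_ifs with hb
    · have : c k ≤ 1 := by
        rcases hc k (by omega) with h | h | h <;> omega
      have : (c k : ℝ) ≤ 1 := by exact_mod_cast this
      nlinarith
    · have : c k = 0 := by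
        rcases hc k (by omega) with h | h | h
        · omega
        · omega
        · exact absurd ⟨h.1, h.2.1⟩ hb
      simp [this]
  have h2 : ∑ k ∈ Finset.Ico p (m+1), lam m δ k * c k ≤
      ∑ k ∈ Finset.Ico p (m+1), ((l:ℝ) - (((A ∪ SS n m S k)ᶜ).card : ℝ)) * lam m δ k := by
    apply Finset.sum_le_sum
    intro k hk
    rw [Finset.mem_Ico] at hk
    have hlk := hl k (by omega)
    have hck : ((A ∪ SS n m S k)ᶜ).card ≤ ((A ∪ SS n m S p)ᶜ).card := by
      apply Finset.card_le_card
      rw [Finset.compl_subset_compl]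
      exact Finset.union_subset_union_right (mono hk.1)
    have : c k + ((A ∪ SS n m S k)ᶜ).card ≤ l := by
      rcases hc k (by omega) with h | h | h <;> omega
    have : (c k : ℝ) + ((A ∪ SS n m S k)ᶜ).card ≤ l := by exact_mod_cast this
    nlinarith
  rw [split_sum _ p (m+1) hle]
  linarith

end core

lemma X_finite (n m l u : ℕ) (S : Fin m → Finset (Fin n)) : (Xset n m l u S).Finite := by
  have h1 : (Set.univ.pi (fun _ : Fin n => ({0, 1} : Set ℝ))).Finite :=
    Set.Finite.pi' (fun _ => Set.toFinite _) |>.subset (by intro x hx i; exact hx i (Set.mem_univ i))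
  have h2 : (Set.univ.pi (fun _ : Fin m => ({0, 1} : Set ℝ))).Finite :=
    Set.Finite.pi' (fun _ => Set.toFinite _) |>.subset (by intro x hx i; exact hx i (Set.mem_univ i))
  refine (h1.prod h2).subset ?_
  intro x hx
  refine ⟨fun i _ => ?_, fun i _ => ?_⟩
  · simpa using hx.1 i
  · simpa using hx.2.1 i

lemma poly_sub (n m l u : ℕ) (S : Fin m → Finset (Fin n))
    (hm : 0 < m) (hu : 2 ≤ u) (hlu : l < u)
    (hnested : ∀ i j : Fin m, i < j → S i ⊂ S j)
    (hS1 : 2 ≤ (SS n m S 1).card)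
    (hSm : l ≤ n - (SS n m S m).card) :
    Poly n m l u S ⊆ convexHull ℝ (Xset n m l u S) := by
  classical
  rintro ⟨z, δ⟩ hP
  by_contra hnot
  have mono := SS_mono n m S hnested
  obtain ⟨f, c, hf1, hf2⟩ := geometric_hahn_banach_closed_point (convex_convexHull ℝ _)
    ((X_finite n m l u S).isClosed_convexHull ℝ) hnot
  let α : Fin n → ℝ := fun j => f (Pi.single j 1, 0)
  have hlk : ∀ k ≤ m, l ≤ ((SS n m S k)ᶜ).card := by
    intro k hk
    rw [Finset.card_compl, Fintype.card_fin]
    have := Finset.card_le_card (mono hk)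
    omega
  have hT : ∀ k : ℕ, ∃ T : Finset (Fin n), k ≤ m → Feas n m l u S k T ∧
    (∀ t : ℝ, 0 < t → ∀ A, A = Finset.univ.filter (fun j => t ≤ α j) →
      ((A \ SS n m S k).card ≤ (T ∩ A).card ∨ u ≤ (T ∩ A).card ∨
        (k < m ∧ Disjoint A (SS n m S (k+1) \ SS n m S k) ∧ u ≤ (T ∩ A).card + 1))) ∧
    (∀ t : ℝ, t < 0 → ∀ B, B = Finset.univ.filter (fun j => α j ≤ t) →
      ((T ∩ B).card = 0 ∨ (T ∩ B).card + ((B ∪ SS n m S k)ᶜ).card ≤ l ∨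
        (k < m ∧ (SS n m S (k+1) \ SS n m S k) ⊆ B ∧ (T ∩ B).card ≤ 1))) := by
    intro k
    by_cases hk : k ≤ m
    · obtain ⟨T, hT⟩ := greedy (SS n m S k) (SS n m S (k+1) \ SS n m S k) (k < m) l u hlu
        (layer_nonempty n m S hnested hS1 k) Finset.sdiff_disjoint (hlk k hk) α
      exact ⟨T, fun _ => hT⟩
    · exact ⟨∅, fun h => absurd h hk⟩
  choose T hT using hT
  have hl := lam_nonneg hm hS1 hP.1
  let y : (Fin n → ℝ) × (Fin m → ℝ) := ∑ k ∈ Finset.range (m+1), lam m δ k • pt n m (T k) k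
  have hy : y ∈ convexHull ℝ (Xset n m l u S) := by
    apply (convex_convexHull ℝ _).sum_mem
    · intro k hk; exact hl k (by rw [Finset.mem_range] at hk; omega)
    · rw [sum_lam, dd_gt _ _ _ (by omega)]; ring
    · intro k hk
      rw [Finset.mem_range] at hk
      exact subset_convexHull ℝ _ (pt_mem n m l u S hnested k _ (hT k (by omega)).1)
  have hy2 : y.2 = δ := by
    funext i
    have : y.2 i = ∑ k ∈ Finset.range (m+1), lam m δ k * (if i.val + 1 ≤ k then 1 else 0) := by
      simp [y, Prod.snd_sum, Finset.sum_apply, pt]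
    rw [this]
    have hi := i.isLt
    rw [split_sum _ (i.val+1) (m+1) (by omega)]
    rw [Finset.sum_eq_zero (s := Finset.range (i.val+1)) (by
      intro k hk
      rw [Finset.mem_range] at hk
      rw [if_neg (by omega), mul_zero])]
    rw [Finset.sum_congr rfl (g := fun k => lam m δ k) (by
      intro k hk
      rw [Finset.mem_Ico] at hk
      rw [if_pos (by omega), mul_one])]
    have := split_sum (lam m δ) (i.val+1) (m+1) (by omega)
    rw [sum_lam, sum_lam, dd_gt _ _ _ (by omega), dd_succ] at this
    linarith
  have hy1 : ∀ A : Finset (Fin n), ∑ j ∈ A, y.1 j =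
      ∑ k ∈ Finset.range (m+1), lam m δ k * ((T k ∩ A).card : ℝ) := by
    intro A
    have : ∀ j, y.1 j = ∑ k ∈ Finset.range (m+1), lam m δ k * (pt n m (T k) k).1 j := by
      intro j
      simp [y, Prod.fst_sum, Finset.sum_apply]
    simp only [this]
    rw [Finset.sum_comm]
    apply Finset.sum_congr rfl
    intro k _
    rw [← Finset.mul_sum, sum_pt]
  have hln : l ≤ n := by omega
  have key : 0 ≤ ∑ j, α j * (y.1 j - z j) := by
    apply layercake
    · intro t ht
      rw [Finset.sum_sub_distrib, hy1]
      have := upper hm hu hnested hS1 hP _ (fun k => (T k ∩ _).card)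
        (fun k hk => (hT k hk).2.1 t ht _ rfl)
      linarith
    · intro t ht
      rw [Finset.sum_sub_distrib, hy1]
      have := lower hm hnested hS1 hln hP _ (fun k => (T k ∩ _).card)
        (fun k hk => (hT k hk).2.2 t ht _ rfl)
      linarith
  have hfv : ∀ v : Fin n → ℝ, f (v, 0) = ∑ j, α j * v j := by
    intro v
    have : (v, (0 : Fin m → ℝ)) = ∑ j, v j • ((Pi.single j 1, 0) : (Fin n → ℝ) × (Fin m → ℝ)) := by
      apply Prod.ext
      · funext i
        simp [Prod.fst_sum, Finset.sum_apply, Pi.single_apply]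
      · simp [Prod.snd_sum]
    rw [this, map_sum]
    apply Finset.sum_congr rfl
    intro j _
    rw [map_smul, smul_eq_mul, mul_comm]
  have hd : y - (z, δ) = (y.1 - z, 0) := by
    apply Prod.ext
    · rfl
    · simp [hy2]
  have h1 := hf1 y hy
  have h2 : f y - f (z, δ) = ∑ j, α j * (y.1 j - z j) := by
    rw [← map_sub, hd, hfv]; rfl
  linarith

end P13

theorem stmt13 (n m l u : ℕ) (S : Fin m → Finset (Fin n))
    (hn : 0 < n) (hm : 0 < m) (hu : 2 ≤ u) (hlu : l < u)
    (hnested : ∀ i j : Fin m, i < j → S i ⊂ S j)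
    (hS1 : 2 ≤ (SS n m S 1).card)
    (hSm : l ≤ n - (SS n m S m).card)
    :
    convexHull ℝ (Xset n m l u S) =
      {zd : (Fin n → ℝ) × (Fin m → ℝ) |
        NestedLin n m l u S zd ∧
        (∀ p : ℕ, 1 ≤ p → p ≤ m → ∀ S' : Finset (Fin n),
          (S' \ SS n m S p).card ≤ u - 1 → MixLe n m u S p S' zd) ∧
        (∀ p : ℕ, 1 ≤ p → p ≤ m → ∀ S' : Finset (Fin n),
          (S' ∪ SS n m S (p - 1)).card ≤ n - l → n - l < (S' ∪ SS n m S p).card →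
            MixGe n m l S p S' zd)} := by
  exact Set.Subset.antisymm
    (convexHull_min (P13.X_sub n m l u S hm hnested) (P13.poly_convex n m l u S))
    (P13.poly_sub n m l u S hm hu hlu hnested hS1 hSm)
end
end
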